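/- arXiv:1112.5677 — 2 statements merged into one kernel-verified Lean document; each statement's English description precedes it below -/
import Mathlib

section
/- Let 1 < p < 2 and 1/p + 1/q = 1. There is a constant c_p > 0 with the following property: let I, J be two intervals in [0,2π], let l be an affine map of I onto J with tangent coefficient a (so |a| = |J|/|I|), and let U, V ∈ A_p(𝕋) vanish on [0,2π] \ I and [0,2π] \ J respectively, with U(t) = V(l(t)) for t ∈ I. Then ‖U‖_{A_p(𝕋)} ≤ c_p · |a|^{-1/q} · ‖V‖_{A_p(𝕋)}. The constant c_p is independent of U, V, l, I, J. -/
open MeasureTheory Real Set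
open scoped ENNReal

/-- The k-th Fourier coefficient of a (2π-periodic) function on the circle,
identified with a function on [0, 2π]. -/
noncomputable def fourierCoef (f : ℝ → ℂ) (k : ℤ) : ℂ :=
  (1 / (2 * (Real.pi : ℂ))) *
    ∫ t in (0:ℝ)..(2 * Real.pi), f t * Complex.exp (-Complex.I * (k : ℂ) * (t : ℂ))

/-- The A_p(𝕋) norm: ℓ^p norm of the sequence of Fourier coefficients
(valued in ℝ≥0∞ so that divergence gives ∞). -/
noncomputable def ApNorm (p : ℝ) (f : ℝ → ℂ) : ℝ≥0∞ :=
  (∑' k : ℤ, ((‖fourierCoef f k‖₊ : ℝ≥0∞) ^ p)) ^ (1 / p)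

/-!
Write `Φ f` for the Fourier transform of `f` restricted to `[0, 2π]`, so that the Fourier
coefficients of `f` are the values of `Φ f` at the integers. An affine change of variables turns
`Φ V` into `Φ U` by a dilation and a phase, so the `Lᵖ(ℝ)` norms of `Φ U` and `Φ V` differ exactly
by the factor `|a| ^ (-1/q)`. It remains to see that the `Lᵖ(ℝ)` norm of `Φ f` is comparable to
the `ℓᵖ(ℤ)` norm of its samples. Integrating over translates of `ℤ`, this amounts to bounding the
samples of `Φ f` on `δ + ℤ` by those on `ℤ`, uniformly in `δ`.

Parseval's identity expresses `Φ f (δ + k)` as the sum over `m` of `Φ f m` against the kernel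
`S (δ + k - m)`, where `S` is the Fourier transform of the indicator of `[0, 2π]`. Since
`x * S x` is `1`-periodic, this is a discrete Hilbert transform up to an absolutely convergent
error. For nonnegative coefficients it is dominated by the Cauchy sum
`F z = ∑ m, i c_m / (z - m + i)`, which has positive real part on the upper half plane, and
M. Riesz' argument applies: `F ^ p` is holomorphic there, so its integral over `ℝ` vanishes by
Cauchy's theorem, and as `1 < p ≤ 2` this bounds the integral of `‖F‖ ^ p` by that of `(re F) ^ p`.
-/

section RieszInequality

lemma exists_le_const_mul_cos_rpow_sub_cos_mul {p : ℝ} (hp1 : 1 < p) (hp2 : p ≤ 2) :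
    ∃ A B : ℝ, 0 ≤ A ∧ 0 < B ∧ ∀ θ : ℝ, |θ| ≤ π / 2 → B ≤ A * cos θ ^ p - cos (θ * p) := by
  have hpi := Real.pi_pos
  obtain ⟨θ₀, hgt, hlt⟩ : ∃ θ₀, π / 2 / p < θ₀ ∧ θ₀ < π / 2 :=
    exists_between (div_lt_self (by positivity) hp1)
  rw [div_lt_iff₀ (by linarith)] at hgt
  have hθ₀ : 0 < θ₀ := by nlinarith
  have hcos : 0 < cos θ₀ := cos_pos_of_mem_Ioo ⟨by linarith, hlt⟩
  have hcos_p : cos (θ₀ * p) < 0 := cos_neg_of_pi_div_two_lt_of_lt hgt (by nlinarith)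
  have hA : 0 ≤ (1 - cos (θ₀ * p)) / cos θ₀ ^ p := div_nonneg (by linarith) (by positivity)
  refine ⟨_, -cos (θ₀ * p), hA, by linarith, fun θ hθ => ?_⟩
  have hcosθ : 0 ≤ cos θ := cos_nonneg_of_mem_Icc ⟨by linarith [(abs_le.1 hθ).1], (abs_le.1 hθ).2⟩
  rcases le_total θ₀ |θ| with h | h
  · have hle : cos (θ * p) ≤ cos (θ₀ * p) := by
      rw [← cos_abs (θ * p), abs_mul, abs_of_pos (by linarith : 0 < p)]
      apply cos_le_cos_of_nonneg_of_le_pi (by positivity) <;> nlinarith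
    have : 0 ≤ (1 - cos (θ₀ * p)) / cos θ₀ ^ p * cos θ ^ p := by positivity
    linarith
  · have hle : cos θ₀ ^ p ≤ cos θ ^ p := by
      rw [← cos_abs θ]
      gcongr
      exact cos_le_cos_of_nonneg_of_le_pi (abs_nonneg _) (by linarith) h
    have : 1 - cos (θ₀ * p) ≤ (1 - cos (θ₀ * p)) / cos θ₀ ^ p * cos θ ^ p := by
      rw [div_mul_eq_mul_div, le_div_iff₀ (by positivity)]
      exact mul_le_mul_of_nonneg_left hle (by linarith)
    linarith [cos_le_one (θ * p)]

lemma exists_const_mul_norm_rpow_le_re_rpow_sub_re_cpow {p : ℝ} (hp1 : 1 < p) (hp2 : p ≤ 2) :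
    ∃ A B : ℝ, 0 ≤ A ∧ 0 < B ∧ ∀ w : ℂ, 0 ≤ w.re →
      B * ‖w‖ ^ p ≤ A * w.re ^ p - (w ^ (p : ℂ)).re := by
  obtain ⟨A, B, hA, hB, h⟩ := exists_le_const_mul_cos_rpow_sub_cos_mul hp1 hp2
  refine ⟨A, B, hA, hB, fun w hw => ?_⟩
  have harg : |w.arg| ≤ π / 2 := Complex.abs_arg_le_pi_div_two_iff.2 hw
  have hcos : 0 ≤ cos w.arg :=
    cos_nonneg_of_mem_Icc ⟨by linarith [(abs_le.1 harg).1], (abs_le.1 harg).2⟩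
  calc B * ‖w‖ ^ p ≤ (A * cos w.arg ^ p - cos (w.arg * p)) * ‖w‖ ^ p := by
        gcongr
        exact h _ harg
    _ = A * w.re ^ p - (w ^ (p : ℂ)).re := by
        rw [Complex.cpow_ofReal_re, ← Complex.norm_mul_cos_arg w, mul_rpow (norm_nonneg _) hcos]
        ring

lemma norm_integral_le_of_differentiableOn_upperHalfPlane {E : Type*} [NormedAddCommGroup E]
    [NormedSpace ℂ E] {F : ℂ → E} {M R : ℝ} (hR : 0 ≤ R)
    (hF : DifferentiableOn ℂ F {z | 0 ≤ z.im})
    (hM : ∀ z : ℂ, 0 ≤ z.im → R ≤ ‖z‖ → ‖F z‖ ≤ M) :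
    ‖∫ x in (-R)..R, F x‖ ≤ 4 * R * M := by
  have hrect := Complex.integral_boundary_rect_eq_zero_of_differentiableOn F
    (⟨-R, 0⟩ : ℂ) (⟨R, R⟩ : ℂ) (hF.mono fun z hz => by
      have := hz.2
      rw [uIcc_of_le hR] at this
      exact this.1)
  simp only [Complex.ofReal_zero, zero_mul, add_zero] at hrect
  have htop : ‖∫ x in (-R)..R, F (x + R * Complex.I)‖ ≤ M * |R - -R| := by
    refine intervalIntegral.norm_integral_le_of_norm_le_const fun x _ => hM _ (by simpa) ?_
    simpa [abs_of_nonneg hR] using Complex.abs_im_le_norm (x + R * Complex.I)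
  have hside (c : ℝ) (hc : |c| = R) :
      ‖Complex.I • ∫ y in (0 : ℝ)..R, F (c + y * Complex.I)‖ ≤ M * |R - 0| := by
    rw [norm_smul, Complex.norm_I, one_mul]
    refine intervalIntegral.norm_integral_le_of_norm_le_const fun y hy => hM _ ?_ ?_
    · rw [uIoc_of_le hR] at hy
      simpa using hy.1.le
    · simpa [hc] using Complex.abs_re_le_norm (c + y * Complex.I)
  have hright := hside R (abs_of_nonneg hR)
  have hleft := hside (-R) (by rw [abs_neg, abs_of_nonneg hR])
  rw [sub_eq_zero, add_comm, ← eq_sub_iff_add_eq', sub_eq_iff_eq_add] at hrect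
  rw [hrect]
  calc _ ≤ M * |R - 0| + M * |R - 0| + M * |R - -R| :=
        norm_add_le_of_le (norm_sub_le_of_le hleft hright) htop
    _ = 4 * R * M := by
        rw [sub_neg_eq_add, sub_zero, abs_of_nonneg hR, abs_of_nonneg (by linarith : 0 ≤ R + R)]
        ring

lemma integral_eq_zero_of_differentiableOn_upperHalfPlane {E : Type*} [NormedAddCommGroup E]
    [NormedSpace ℂ E] {F : ℂ → E} {D r : ℝ} (hr : 1 < r)
    (hF : DifferentiableOn ℂ F {z | 0 ≤ z.im})
    (hD : ∀ z : ℂ, 0 ≤ z.im → ‖F z‖ ≤ D * (1 + ‖z‖) ^ (-r)) :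
    ∫ x : ℝ, F x = 0 := by
  have hcont : Continuous fun x : ℝ => F x :=
    hF.continuousOn.comp_continuous Complex.continuous_ofReal (by simp)
  have hint : Integrable fun x : ℝ => F x :=
    ((integrable_one_add_norm (E := ℝ) (by simpa)).const_mul D).mono' hcont.aestronglyMeasurable
      (.of_forall fun x => by simpa using hD x (by simp))
  have hD0 : 0 ≤ D := (norm_nonneg _).trans (by simpa using hD 0 le_rfl)
  have hlim : Filter.Tendsto (fun R : ℝ => 4 * D * (1 + R) ^ (1 - r)) Filter.atTop (nhds 0) := by
    have : Filter.Tendsto (fun R : ℝ => (1 + R) ^ (1 - r)) Filter.atTop (nhds 0) := by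
      simpa [Function.comp_def] using (tendsto_rpow_neg_atTop (sub_pos.2 hr)).comp
        (Filter.tendsto_atTop_add_const_left Filter.atTop 1 Filter.tendsto_id)
    simpa using this.const_mul (4 * D)
  refine tendsto_nhds_unique
    (intervalIntegral_tendsto_integral hint Filter.tendsto_neg_atTop_atBot Filter.tendsto_id)
    (squeeze_zero_norm' ?_ hlim)
  filter_upwards [Filter.eventually_ge_atTop 0] with R hR
  calc ‖∫ x in (-R)..R, F x‖ ≤ 4 * R * (D * (1 + R) ^ (-r)) := by
        refine norm_integral_le_of_differentiableOn_upperHalfPlane hR hF fun z hz hRz =>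
          (hD z hz).trans ?_
        gcongr ?_ * ?_
        exact rpow_le_rpow_of_nonpos (by linarith) (by linarith) (by linarith)
    _ ≤ 4 * (1 + R) * (D * (1 + R) ^ (-r)) := by gcongr; linarith
    _ = 4 * D * (1 + R) ^ (1 - r) := by
        rw [sub_eq_add_neg, rpow_add (by linarith), rpow_one]
        ring

variable {p D : ℝ} {F : ℂ → ℂ}

lemma integrable_norm_rpow_of_decay (hp : 1 < p) {g : ℝ → ℂ} (hg : Continuous g)
    (hD : ∀ x, ‖g x‖ ≤ D * (1 + ‖x‖)⁻¹) : Integrable fun x => ‖g x‖ ^ p := by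
  have hD0 : 0 ≤ D := (norm_nonneg _).trans (by simpa using hD 0)
  refine ((integrable_one_add_norm (E := ℝ) (μ := volume) (r := p) (by simpa)).const_mul
    (D ^ p)).mono' (by fun_prop (disch := linarith)) (.of_forall fun x => ?_)
  rw [norm_of_nonneg (by positivity)]
  refine (rpow_le_rpow (norm_nonneg _) (hD x) (by linarith)).trans_eq ?_
  rw [mul_rpow hD0 (by positivity), inv_rpow (by positivity), rpow_neg (by positivity)]

/-- A form of M. Riesz' inequality: by Cauchy's theorem `∫ F ^ p = 0`, and `‖w‖ ^ p` is controlled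
by `w.re ^ p` up to a multiple of `(w ^ p).re`. -/
lemma exists_integral_norm_rpow_le_integral_re_rpow (hp1 : 1 < p) (hp2 : p ≤ 2) :
    ∃ C : ℝ, 0 ≤ C ∧ ∀ (F : ℂ → ℂ) (D : ℝ), DifferentiableOn ℂ F {z | 0 ≤ z.im} →
      (∀ z : ℂ, 0 ≤ z.im → 0 < (F z).re) → (∀ z : ℂ, 0 ≤ z.im → ‖F z‖ ≤ D * (1 + ‖z‖)⁻¹) →
      ∫ x : ℝ, ‖F x‖ ^ p ≤ C * ∫ x : ℝ, (F x).re ^ p := by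
  obtain ⟨A, B, hA, hB, hAB⟩ := exists_const_mul_norm_rpow_le_re_rpow_sub_re_cpow hp1 hp2
  refine ⟨A / B, by positivity, fun F D hF hpos hD => ?_⟩
  have hD0 : 0 ≤ D := (norm_nonneg _).trans (by simpa using hD 0 le_rfl)
  have hFp : DifferentiableOn ℂ (fun z => F z ^ (p : ℂ)) {z | 0 ≤ z.im} := fun z hz =>
    (hF z hz).cpow (differentiableWithinAt_const _) (.inl (hpos z hz))
  have hcauchy : ∫ x : ℝ, F x ^ (p : ℂ) = 0 := by
    refine integral_eq_zero_of_differentiableOn_upperHalfPlane (D := D ^ p) hp1 hFp fun z hz => ?_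
    rw [Complex.norm_cpow_real]
    refine (rpow_le_rpow (norm_nonneg _) (hD z hz) (by linarith)).trans_eq ?_
    rw [mul_rpow hD0 (by positivity), inv_rpow (by positivity), rpow_neg (by positivity)]
  have hcont : Continuous fun x : ℝ => F x :=
    hF.continuousOn.comp_continuous Complex.continuous_ofReal (by simp)
  have hnorm : Integrable fun x : ℝ => ‖F x‖ ^ p :=
    integrable_norm_rpow_of_decay hp1 hcont fun x => by simpa using hD x (by simp)
  have hcpow : Integrable fun x : ℝ => F x ^ (p : ℂ) :=
    hnorm.mono' (hFp.continuousOn.comp_continuous Complex.continuous_ofReal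
      (by simp)).aestronglyMeasurable (.of_forall fun x => (Complex.norm_cpow_real _ _).le)
  have hre : Integrable fun x : ℝ => (F x).re ^ p := by
    refine hnorm.mono' ?_ (.of_forall fun x => ?_)
    · exact ((Complex.continuous_re.comp hcont).rpow_const
        fun _ => .inr (by linarith)).aestronglyMeasurable
    have := (hpos x (by simp)).le
    rw [norm_of_nonneg (by positivity)]
    gcongr
    exact Complex.re_le_norm _
  have hcpow_re_int : Integrable fun x : ℝ => (F x ^ (p : ℂ)).re := hcpow.re
  have hcpow_re : ∫ x : ℝ, (F x ^ (p : ℂ)).re = 0 := by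
    simpa [hcauchy] using integral_re hcpow
  rw [div_mul_eq_mul_div, le_div_iff₀' hB]
  calc B * ∫ x : ℝ, ‖F x‖ ^ p = ∫ x : ℝ, B * ‖F x‖ ^ p := (integral_const_mul _ _).symm
    _ ≤ ∫ x : ℝ, (A * (F x).re ^ p - (F x ^ (p : ℂ)).re) :=
        integral_mono (hnorm.const_mul B) ((hre.const_mul A).sub hcpow_re_int)
          fun x => hAB _ (hpos x (by simp)).le
    _ = A * ∫ x : ℝ, (F x).re ^ p := by
        rw [integral_sub (hre.const_mul A) hcpow_re_int, integral_const_mul, hcpow_re, sub_zero]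

end RieszInequality

section CauchySums

lemma sum_le_integral_of_forall_Ioc_le {g : ℝ → ℝ} (hg : Integrable g) (hg0 : 0 ≤ g) {δ : ℝ}
    {K : Finset ℤ} {a : ℤ → ℝ} (ha : ∀ k ∈ K, ∀ x ∈ Ioc (δ + k) (δ + k + 1), a k ≤ g x) :
    ∑ k ∈ K, a k ≤ ∫ x, g x := by
  calc ∑ k ∈ K, a k ≤ ∑ k ∈ K, ∫ x in Ioc (δ + k) (δ + k + 1), g x := by
        gcongr with k hk
        calc a k = ∫ _ in Ioc (δ + k) (δ + k + 1), a k := by simp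
          _ ≤ ∫ x in Ioc (δ + k) (δ + k + 1), g x :=
              setIntegral_mono_on (by simp) hg.integrableOn measurableSet_Ioc (ha k hk)
    _ = ∫ x in ⋃ k ∈ K, Ioc (δ + k) (δ + k + 1), g x :=
        (integral_biUnion_finset K (fun _ _ => measurableSet_Ioc)
          ((pairwise_disjoint_Ioc_add_intCast δ).set_pairwise _)
          fun _ _ => hg.integrableOn).symm
    _ ≤ ∫ x, g x := setIntegral_le_integral hg (.of_forall hg0)

lemma sum_inv_one_add_sub_intCast_sq_le (s : Finset ℤ) (x : ℝ) :
    ∑ m ∈ s, (1 + (x - m) ^ 2)⁻¹ ≤ 3 * π := by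
  have hint : Integrable fun y : ℝ => 3 * (1 + (x - y) ^ 2)⁻¹ :=
    (integrable_inv_one_add_sq.comp_sub_left x).const_mul 3
  calc ∑ m ∈ s, (1 + (x - m) ^ 2)⁻¹ ≤ ∫ y : ℝ, 3 * (1 + (x - y) ^ 2)⁻¹ := by
        refine sum_le_integral_of_forall_Ioc_le (δ := 0) hint (fun y => by positivity)
          fun m _ y hy => ?_
        obtain ⟨hmy, hym⟩ := hy
        rw [← div_eq_mul_inv, inv_eq_one_div, div_le_div_iff₀ (by positivity) (by positivity)]
        nlinarith [sq_nonneg (x - m + (y - m))]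
    _ = 3 * π := by
        rw [integral_const_mul, integral_sub_left_eq_self (fun y : ℝ => (1 + y ^ 2)⁻¹),
          integral_univ_inv_one_add_sq]

/-- The Cauchy transform `i ∑ f m / (z - (m - i))` of the masses `f m` placed at the points
`m - i`. The shift by `i` makes it holomorphic in a neighbourhood of the closed upper half-plane,
so that its boundary values are attained on the real line. -/
noncomputable def cauchySum (s : Finset ℤ) (f : ℤ → ℝ) (z : ℂ) : ℂ :=
  ∑ m ∈ s, f m * (Complex.I / (z - m + Complex.I))

variable {s : Finset ℤ} {f : ℤ → ℝ}

lemma one_le_norm_sub_intCast_add_I {z : ℂ} (hz : 0 ≤ z.im) (m : ℤ) :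
    1 ≤ ‖z - m + Complex.I‖ :=
  calc (1 : ℝ) ≤ |z.im + 1| := by rw [abs_of_nonneg] <;> linarith
    _ ≤ ‖z - m + Complex.I‖ := by simpa using Complex.abs_im_le_norm (z - m + Complex.I)

lemma re_I_div_sub_intCast_add_I (x : ℝ) (m : ℤ) :
    (Complex.I / (x - m + Complex.I)).re = (1 + (x - m) ^ 2)⁻¹ := by
  simp [Complex.div_re, Complex.normSq_apply, add_comm, sq]

lemma cauchySum_ofReal_re (x : ℝ) :
    (cauchySum s f x).re = ∑ m ∈ s, (1 + (x - m) ^ 2)⁻¹ * f m := by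
  simp only [cauchySum, Complex.re_sum, Complex.re_ofReal_mul, re_I_div_sub_intCast_add_I, mul_comm]

lemma cauchySum_re_pos (hf : 0 ≤ f) (hs : ∃ m ∈ s, 0 < f m) {z : ℂ} (hz : 0 ≤ z.im) :
    0 < (cauchySum s f z).re := by
  have hre (m : ℤ) : 0 < (Complex.I / (z - m + Complex.I)).re := by
    have hnormSq : 0 < Complex.normSq (z - m + Complex.I) :=
      Complex.normSq_pos.2 (norm_pos_iff.1 (by linarith [one_le_norm_sub_intCast_add_I hz m]))
    have : 0 < z.im + 1 := by linarith
    simpa [Complex.div_re] using div_pos this hnormSq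
  obtain ⟨m, hm, hfm⟩ := hs
  simp only [cauchySum, Complex.re_sum, Complex.re_ofReal_mul]
  exact Finset.sum_pos' (fun m _ => mul_nonneg (hf m) (hre m).le) ⟨m, hm, mul_pos hfm (hre m)⟩

lemma differentiableOn_cauchySum : DifferentiableOn ℂ (cauchySum s f) {z | 0 ≤ z.im} := by
  refine DifferentiableOn.fun_sum fun m _ => DifferentiableOn.const_mul
    (DifferentiableOn.div (by fun_prop) (by fun_prop) fun z hz => ?_) _
  exact norm_pos_iff.1 (by linarith [one_le_norm_sub_intCast_add_I hz m])

lemma norm_cauchySum_le {z : ℂ} (hz : 0 ≤ z.im) :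
    ‖cauchySum s f z‖ ≤ (∑ m ∈ s, |f m| * (3 + |(m : ℝ)|)) * (1 + ‖z‖)⁻¹ := by
  rw [cauchySum, Finset.sum_mul]
  refine norm_sum_le_of_le _ fun m _ => ?_
  have hle : 1 + ‖z‖ ≤ (3 + |(m : ℝ)|) * ‖z - m + Complex.I‖ := by
    have hone := one_le_norm_sub_intCast_add_I hz m
    have htri : ‖z‖ ≤ ‖z - m + Complex.I‖ + |(m : ℝ)| + 1 :=
      calc ‖z‖ = ‖z - m + Complex.I + m - Complex.I‖ := by ring_nf
        _ ≤ ‖z - m + Complex.I‖ + ‖(m : ℂ)‖ + ‖Complex.I‖ :=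
            norm_sub_le_of_le (norm_add_le _ _) le_rfl
        _ = _ := by simp
    nlinarith [abs_nonneg (m : ℝ)]
  rw [norm_mul, norm_div, Complex.norm_I, Complex.norm_real, norm_eq_abs, mul_assoc]
  refine mul_le_mul_of_nonneg_left ?_ (abs_nonneg _)
  rw [← div_eq_mul_inv,
    div_le_div_iff₀ (by linarith [one_le_norm_sub_intCast_add_I hz m]) (by positivity)]
  linarith

lemma cauchySum_ofReal_re_rpow_le {p : ℝ} (hp : 1 ≤ p) (hf : 0 ≤ f) (x : ℝ) :
    (cauchySum s f x).re ^ p ≤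
      (3 * π) ^ (p - 1) * ∑ m ∈ s, (1 + (x - m) ^ 2)⁻¹ * f m ^ p := by
  have hp0 : 0 < p := by linarith
  have hw (m : ℤ) : 0 ≤ (1 + (x - m) ^ 2)⁻¹ := by positivity
  have hw_sum : 0 ≤ ∑ m ∈ s, (1 + (x - m) ^ 2)⁻¹ := Finset.sum_nonneg fun m _ => hw m
  have hsum : 0 ≤ ∑ m ∈ s, (1 + (x - m) ^ 2)⁻¹ * f m ^ p :=
    Finset.sum_nonneg fun m _ => mul_nonneg (hw m) (rpow_nonneg (hf m) p)
  rw [cauchySum_ofReal_re]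
  calc (∑ m ∈ s, (1 + (x - m) ^ 2)⁻¹ * f m) ^ p
      ≤ ((∑ m ∈ s, (1 + (x - m) ^ 2)⁻¹) ^ (1 - p⁻¹) *
          (∑ m ∈ s, (1 + (x - m) ^ 2)⁻¹ * f m ^ p) ^ p⁻¹) ^ p :=
        rpow_le_rpow (Finset.sum_nonneg fun m _ => mul_nonneg (hw m) (hf m))
          (inner_le_weight_mul_Lp_of_nonneg s hp _ f hw hf) hp0.le
    _ = (∑ m ∈ s, (1 + (x - m) ^ 2)⁻¹) ^ (p - 1) *
          ∑ m ∈ s, (1 + (x - m) ^ 2)⁻¹ * f m ^ p := by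
        rw [mul_rpow (rpow_nonneg hw_sum _) (rpow_nonneg hsum _), ← rpow_mul hw_sum,
          ← rpow_mul hsum, inv_mul_cancel₀ hp0.ne', rpow_one, sub_mul, one_mul,
          inv_mul_cancel₀ hp0.ne']
    _ ≤ (3 * π) ^ (p - 1) * ∑ m ∈ s, (1 + (x - m) ^ 2)⁻¹ * f m ^ p :=
        mul_le_mul_of_nonneg_right
          (rpow_le_rpow hw_sum (sum_inv_one_add_sub_intCast_sq_le s x) (by linarith)) hsum

lemma integral_cauchySum_re_rpow_le {p : ℝ} (hp : 1 ≤ p) (hf : 0 ≤ f) :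
    ∫ x : ℝ, (cauchySum s f x).re ^ p ≤ (3 * π) ^ (p - 1) * π * ∑ m ∈ s, f m ^ p := by
  have hw (m : ℤ) : Integrable fun x : ℝ => (1 + (x - m) ^ 2)⁻¹ :=
    integrable_inv_one_add_sq.comp_sub_right (m : ℝ)
  have hint (m : ℤ) : Integrable fun x : ℝ => (1 + (x - m) ^ 2)⁻¹ * f m ^ p := (hw m).mul_const _
  calc ∫ x : ℝ, (cauchySum s f x).re ^ p
      ≤ ∫ x : ℝ, (3 * π) ^ (p - 1) * ∑ m ∈ s, (1 + (x - m) ^ 2)⁻¹ * f m ^ p := by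
        refine integral_mono_of_nonneg (.of_forall fun x => ?_)
          ((integrable_finsetSum s fun m _ => hint m).const_mul _)
          (.of_forall fun x => cauchySum_ofReal_re_rpow_le hp hf x)
        simp only [cauchySum_ofReal_re]
        exact rpow_nonneg (Finset.sum_nonneg fun m _ => mul_nonneg (by positivity) (hf m)) p
    _ = (3 * π) ^ (p - 1) * π * ∑ m ∈ s, f m ^ p := by
        rw [integral_const_mul, integral_finsetSum s fun m _ => hint m, mul_assoc,
          Finset.mul_sum _ _ π]
        congr! 2 with m
        rw [integral_mul_const, integral_sub_right_eq_self (fun x : ℝ => (1 + x ^ 2)⁻¹),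
          integral_univ_inv_one_add_sq]

lemma exists_integral_norm_cauchySum_rpow_le {p : ℝ} (hp1 : 1 < p) (hp2 : p ≤ 2) :
    ∃ C : ℝ, 0 ≤ C ∧ ∀ (s : Finset ℤ) (f : ℤ → ℝ), 0 ≤ f → (∃ m ∈ s, 0 < f m) →
      ∫ x : ℝ, ‖cauchySum s f x‖ ^ p ≤ C * ∑ m ∈ s, f m ^ p := by
  obtain ⟨C, hC, hRiesz⟩ := exists_integral_norm_rpow_le_integral_re_rpow hp1 hp2
  refine ⟨C * ((3 * π) ^ (p - 1) * π), by positivity, fun s f hf hs => ?_⟩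
  rw [mul_assoc]
  exact (hRiesz _ _ differentiableOn_cauchySum (fun z => cauchySum_re_pos hf hs)
    (fun z => norm_cauchySum_le)).trans (by gcongr; exact integral_cauchySum_re_rpow_le hp1.le hf)

end CauchySums

section SincKernel

/-- The Fourier coefficient of `f` on `[0, 2π]` at the real frequency `y`, so that `fourierCoef f`
samples it at the integers. -/
noncomputable def realFourierCoef (f : ℝ → ℂ) (y : ℝ) : ℂ :=
  (1 / (2 * (π : ℂ))) * ∫ t in (0 : ℝ)..(2 * π), f t * Complex.exp (-Complex.I * y * t)

lemma fourierCoef_eq_realFourierCoef (f : ℝ → ℂ) (k : ℤ) :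
    fourierCoef f k = realFourierCoef f k := by
  simp [fourierCoef, realFourierCoef]

lemma norm_exp_neg_I_mul_mul (x t : ℝ) : ‖Complex.exp (-Complex.I * x * t)‖ = 1 := by
  simp [Complex.norm_exp]

lemma norm_realFourierCoef_le {f : ℝ → ℂ} {M : ℝ} (hf : ∀ t, ‖f t‖ ≤ M) (y : ℝ) :
    ‖realFourierCoef f y‖ ≤ M := by
  have hint : ‖∫ t in (0 : ℝ)..(2 * π), f t * Complex.exp (-Complex.I * y * t)‖
      ≤ M * |2 * π - 0| :=
    intervalIntegral.norm_integral_le_of_norm_le_const fun t _ => by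
      simpa only [norm_mul, norm_exp_neg_I_mul_mul, mul_one] using hf t
  have hpi : ‖1 / (2 * (π : ℂ))‖ = 1 / (2 * π) := by simp [abs_of_pos pi_pos]
  rw [sub_zero, abs_of_pos two_pi_pos] at hint
  rw [realFourierCoef, norm_mul, hpi, div_mul_eq_mul_div, one_mul, div_le_iff₀ two_pi_pos]
  exact hint

/-- The Fourier transform of the indicator of `[0, 2π]`, a modulated sinc function. It is the kernel
that interpolates Fourier coefficients from integer to real frequencies. -/
noncomputable def sincKernel : ℝ → ℂ :=
  realFourierCoef 1

lemma norm_sincKernel_le (x : ℝ) : ‖sincKernel x‖ ≤ 1 :=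
  norm_realFourierCoef_le (by simp) x

lemma mul_sincKernel (x : ℝ) :
    x * sincKernel x = (1 - Complex.exp (-Complex.I * x * (2 * π : ℝ))) / (2 * π * Complex.I) := by
  rcases eq_or_ne x 0 with rfl | hx
  · simp
  have hpi : (π : ℂ) ≠ 0 := by exact_mod_cast pi_ne_zero
  have hx' : (x : ℂ) ≠ 0 := by exact_mod_cast hx
  simp only [sincKernel, realFourierCoef, Pi.one_apply, one_mul]
  rw [integral_exp_mul_complex (mul_ne_zero (neg_ne_zero.2 Complex.I_ne_zero) hx'),
    Complex.ofReal_zero, mul_zero, Complex.exp_zero]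
  field_simp
  ring

lemma norm_mul_sincKernel_le (x : ℝ) : ‖x * sincKernel x‖ ≤ 1 := by
  have hnum : ‖1 - Complex.exp (-Complex.I * x * (2 * π : ℝ))‖ ≤ 1 + 1 :=
    norm_sub_le_of_le norm_one.le (norm_exp_neg_I_mul_mul _ _).le
  have hden : ‖2 * π * Complex.I‖ = 2 * π := by simp [abs_of_pos pi_pos]
  rw [mul_sincKernel, norm_div, hden, div_le_one two_pi_pos]
  linarith [pi_gt_three]

lemma sub_intCast_mul_sincKernel (x : ℝ) (m : ℤ) :
    (x - m) * sincKernel (x - m) = x * sincKernel x := by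
  have hexp : -Complex.I * (x - m : ℝ) * (2 * π : ℝ) =
      -Complex.I * x * (2 * π : ℝ) + m * (2 * π * Complex.I) := by
    push_cast; ring
  have := mul_sincKernel (x - m)
  rw [hexp, Complex.exp_add, Complex.exp_int_mul_two_pi_mul_I, mul_one, ← mul_sincKernel] at this
  exact_mod_cast this

lemma norm_sincKernel_sub_div_le {x x' : ℝ} (h : |x' - x| ≤ 1) :
    ‖sincKernel x - x * sincKernel x / (x' + Complex.I)‖ ≤ 6 * (1 + x' ^ 2)⁻¹ := by
  have hsq : ‖x' + Complex.I‖ ^ 2 = 1 + x' ^ 2 := by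
    rw [← Complex.normSq_eq_norm_sq, Complex.normSq_apply]
    simp [add_comm, sq]
  have hpos : 0 < ‖x' + Complex.I‖ := by
    refine (norm_nonneg _).lt_of_ne' fun h0 => ?_
    nlinarith [sq_nonneg x']
  have hdiff : ‖(x' - x : ℝ) + Complex.I‖ ≤ 2 :=
    (norm_add_le_of_le (by rwa [Complex.norm_real]) Complex.norm_I.le).trans_eq one_add_one_eq_two
  have hS : ‖sincKernel x‖ * ‖x' + Complex.I‖ ≤ 3 :=
    calc ‖sincKernel x‖ * ‖x' + Complex.I‖
        = ‖x * sincKernel x + sincKernel x * ((x' - x : ℝ) + Complex.I)‖ := by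
          rw [← norm_mul]; push_cast; ring_nf
      _ ≤ 1 + 1 * 2 := by
          refine norm_add_le_of_le (norm_mul_sincKernel_le x) ?_
          rw [norm_mul]
          gcongr
          exact norm_sincKernel_le x
      _ = 3 := by norm_num
  calc ‖sincKernel x - x * sincKernel x / (x' + Complex.I)‖
      = ‖sincKernel x * ((x' - x : ℝ) + Complex.I) / (x' + Complex.I)‖ := by
        congr 1
        field_simp [norm_pos_iff.1 hpos]
        push_cast
        ring
    _ = ‖sincKernel x‖ * ‖x' + Complex.I‖ * ‖(x' - x : ℝ) + Complex.I‖ * (1 + x' ^ 2)⁻¹ := by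
        rw [← hsq, norm_div, norm_mul]
        field_simp
    _ ≤ 3 * 2 * (1 + x' ^ 2)⁻¹ := by gcongr
    _ = 6 * (1 + x' ^ 2)⁻¹ := by norm_num

lemma norm_sum_mul_sincKernel_le {s : Finset ℤ} {f : ℤ → ℝ} (hf : 0 ≤ f) {y y' : ℝ}
    (h : |y' - y| ≤ 1) :
    ‖∑ m ∈ s, f m * sincKernel (y - m)‖ ≤ 7 * ‖cauchySum s f y'‖ := by
  set err : ℤ → ℂ := fun m => sincKernel (y - m) -
    (y - m : ℝ) * sincKernel (y - m) / ((y' - m : ℝ) + Complex.I) with herr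
  have hsum : ∑ m ∈ s, f m * sincKernel (y - m) =
      -Complex.I * (y * sincKernel y) * cauchySum s f y' + ∑ m ∈ s, f m * err m := by
    rw [cauchySum, Finset.mul_sum, ← Finset.sum_add_distrib]
    refine Finset.sum_congr rfl fun m _ => ?_
    rw [herr]
    push_cast
    rw [sub_intCast_mul_sincKernel]
    linear_combination (f m * (y * sincKernel y) / (y' - m + Complex.I)) * Complex.I_sq
  have hmain : ‖-Complex.I * (y * sincKernel y) * cauchySum s f y'‖ ≤ ‖cauchySum s f y'‖ := by
    rw [norm_mul, norm_mul, norm_neg, Complex.norm_I, one_mul]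
    exact mul_le_of_le_one_left (norm_nonneg _) (norm_mul_sincKernel_le y)
  have herr_sum : ‖∑ m ∈ s, f m * err m‖ ≤ 6 * ‖cauchySum s f y'‖ :=
    calc ‖∑ m ∈ s, f m * err m‖ ≤ ∑ m ∈ s, 6 * ((1 + (y' - m) ^ 2)⁻¹ * f m) := by
          refine norm_sum_le_of_le _ fun m _ => ?_
          rw [norm_mul, Complex.norm_real, norm_of_nonneg (hf m), ← mul_assoc, mul_comm]
          exact mul_le_mul_of_nonneg_right (norm_sincKernel_sub_div_le (by simpa using h)) (hf m)
      _ = 6 * (cauchySum s f y').re := by rw [cauchySum_ofReal_re, Finset.mul_sum]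
      _ ≤ 6 * ‖cauchySum s f y'‖ := by gcongr; exact Complex.re_le_norm _
  rw [hsum]
  exact (norm_add_le_of_le hmain herr_sum).trans_eq (by ring)

lemma exists_sum_norm_sum_mul_sincKernel_rpow_le_of_nonneg {p : ℝ} (hp1 : 1 < p) (hp2 : p ≤ 2) :
    ∃ C : ℝ, 0 ≤ C ∧ ∀ (δ : ℝ) (K s : Finset ℤ) (f : ℤ → ℝ), 0 ≤ f →
      ∑ k ∈ K, ‖∑ m ∈ s, f m * sincKernel (δ + k - m)‖ ^ p ≤ C * ∑ m ∈ s, f m ^ p := by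
  obtain ⟨C, hC, hbound⟩ := exists_integral_norm_cauchySum_rpow_le hp1 hp2
  refine ⟨7 ^ p * C, by positivity, fun δ K s f hf => ?_⟩
  by_cases! hs : ∃ m ∈ s, 0 < f m
  · have hint : Integrable fun x : ℝ => ‖cauchySum s f x‖ ^ p :=
      integrable_norm_rpow_of_decay hp1
        (differentiableOn_cauchySum.continuousOn.comp_continuous Complex.continuous_ofReal
          (by simp))
        fun x => by simpa using norm_cauchySum_le (s := s) (f := f) (z := x) (by simp)
    calc ∑ k ∈ K, ‖∑ m ∈ s, f m * sincKernel (δ + k - m)‖ ^ p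
        ≤ ∫ x : ℝ, 7 ^ p * ‖cauchySum s f x‖ ^ p := by
          refine sum_le_integral_of_forall_Ioc_le (δ := δ) (hint.const_mul _)
            (fun x => by positivity) fun k _ x hx => ?_
          rw [← mul_rpow (by norm_num) (norm_nonneg _)]
          gcongr
          refine norm_sum_mul_sincKernel_le hf ?_
          rw [abs_le]
          constructor <;> linarith [hx.1, hx.2]
      _ ≤ 7 ^ p * (C * ∑ m ∈ s, f m ^ p) := by
          rw [integral_const_mul]
          gcongr
          exact hbound s f hf hs
      _ = 7 ^ p * C * ∑ m ∈ s, f m ^ p := by ring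
  · have hzero : ∀ m ∈ s, f m = 0 := fun m hm => le_antisymm (hs m hm) (hf m)
    have hsum (k : ℤ) : ∑ m ∈ s, f m * sincKernel (δ + k - m) = 0 :=
      Finset.sum_eq_zero fun m hm => by simp [hzero m hm]
    have hp0 : p ≠ 0 := by linarith
    simp only [hsum, norm_zero, zero_rpow hp0, Finset.sum_const_zero]
    exact mul_nonneg (by positivity) (Finset.sum_nonneg fun m _ => rpow_nonneg (hf m) p)

lemma sum_range_four_I_pow_mul_posPart_re (z : ℂ) :
    ∑ j ∈ Finset.range 4, Complex.I ^ j * (((-Complex.I) ^ j * z).re⁺ : ℝ) = z := by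
  have hre := posPart_sub_negPart z.re
  have him := posPart_sub_negPart z.im
  apply Complex.ext <;> simp [Finset.sum_range_succ, pow_succ] <;> linarith

lemma norm_sum_mul_rpow_le_sum_posPart_re {ι : Type*} {p : ℝ} (hp : 1 ≤ p) (s : Finset ι)
    (c a : ι → ℂ) :
    ‖∑ m ∈ s, c m * a m‖ ^ p ≤ 4 ^ (p - 1) *
      ∑ j ∈ Finset.range 4, ‖∑ m ∈ s, (((-Complex.I) ^ j * c m).re⁺ : ℝ) * a m‖ ^ p := by
  have hdecomp : ∑ m ∈ s, c m * a m = ∑ j ∈ Finset.range 4,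
      Complex.I ^ j * ∑ m ∈ s, (((-Complex.I) ^ j * c m).re⁺ : ℝ) * a m := by
    simp_rw [Finset.mul_sum, ← mul_assoc]
    rw [Finset.sum_comm]
    simp_rw [← Finset.sum_mul, sum_range_four_I_pow_mul_posPart_re]
  calc ‖∑ m ∈ s, c m * a m‖ ^ p
      ≤ (∑ j ∈ Finset.range 4, ‖∑ m ∈ s, (((-Complex.I) ^ j * c m).re⁺ : ℝ) * a m‖) ^ p := by
        rw [hdecomp]
        gcongr
        exact norm_sum_le_of_le _ fun j _ => by simp
    _ ≤ _ := by
        simpa using rpow_sum_le_const_mul_sum_rpow_of_nonneg (Finset.range 4) hp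
          fun j _ => norm_nonneg (∑ m ∈ s, (((-Complex.I) ^ j * c m).re⁺ : ℝ) * a m)

lemma sum_norm_sum_mul_rpow_le_of_nonneg {ι κ : Type*} {p C : ℝ} (hp : 1 ≤ p) (hC : 0 ≤ C)
    {K : Finset κ} {s : Finset ι} {a : κ → ι → ℂ}
    (ha : ∀ f : ι → ℝ, 0 ≤ f → ∑ k ∈ K, ‖∑ m ∈ s, f m * a k m‖ ^ p ≤ C * ∑ m ∈ s, f m ^ p)
    (c : ι → ℂ) :
    ∑ k ∈ K, ‖∑ m ∈ s, c m * a k m‖ ^ p ≤ 4 ^ p * C * ∑ m ∈ s, ‖c m‖ ^ p := by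
  set g : ℕ → ι → ℝ := fun j m => ((-Complex.I) ^ j * c m).re⁺
  have hg_nonneg (j : ℕ) : 0 ≤ g j := fun m => posPart_nonneg _
  have hg_le (j : ℕ) (m : ι) : g j m ≤ ‖c m‖ :=
    sup_le ((Complex.re_le_norm _).trans_eq (by simp)) (norm_nonneg _)
  calc ∑ k ∈ K, ‖∑ m ∈ s, c m * a k m‖ ^ p
      ≤ ∑ k ∈ K, 4 ^ (p - 1) * ∑ j ∈ Finset.range 4, ‖∑ m ∈ s, g j m * a k m‖ ^ p :=
        Finset.sum_le_sum fun k _ => norm_sum_mul_rpow_le_sum_posPart_re hp s c (a k)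
    _ = 4 ^ (p - 1) * ∑ j ∈ Finset.range 4, ∑ k ∈ K, ‖∑ m ∈ s, g j m * a k m‖ ^ p := by
        rw [← Finset.mul_sum, Finset.sum_comm]
    _ ≤ 4 ^ (p - 1) * ∑ _j ∈ Finset.range 4, C * ∑ m ∈ s, ‖c m‖ ^ p := by
        gcongr with j
        refine (ha _ (hg_nonneg j)).trans ?_
        gcongr with m
        exact hg_le j m
    _ = 4 ^ p * C * ∑ m ∈ s, ‖c m‖ ^ p := by
        rw [Finset.sum_const, Finset.card_range, nsmul_eq_mul, rpow_sub_one (by norm_num)]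
        push_cast
        ring

lemma exists_sum_norm_sum_mul_sincKernel_rpow_le {p : ℝ} (hp1 : 1 < p) (hp2 : p ≤ 2) :
    ∃ C : ℝ, 0 ≤ C ∧ ∀ (δ : ℝ) (K s : Finset ℤ) (c : ℤ → ℂ),
      ∑ k ∈ K, ‖∑ m ∈ s, c m * sincKernel (δ + k - m)‖ ^ p ≤ C * ∑ m ∈ s, ‖c m‖ ^ p := by
  obtain ⟨C, hC, h⟩ := exists_sum_norm_sum_mul_sincKernel_rpow_le_of_nonneg hp1 hp2
  exact ⟨4 ^ p * C, by positivity, fun δ K s c =>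
    sum_norm_sum_mul_rpow_le_of_nonneg hp1.le hC (h δ K s) c⟩

end SincKernel

section FourierRepresentation

lemma ae_eq_zero_of_forall_integral_boundedContinuous_smul_eq_zero {X E : Type*}
    [TopologicalSpace X] [HasOuterApproxClosed X] [MeasurableSpace X] [BorelSpace X]
    [NormedAddCommGroup E] [NormedSpace ℝ E] [CompleteSpace E] {μ : Measure X} {f : X → E}
    (hf : Integrable f μ)
    (h : ∀ g : BoundedContinuousFunction X NNReal, ∫ x, (g x : ℝ) • f x ∂μ = 0) :
    f =ᵐ[μ] 0 := by
  refine ae_eq_zero_of_forall_setIntegral_isClosed_eq_zero hf fun s hs => ?_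
  have hlim (x : X) : Filter.Tendsto (fun n => (hs.apprSeq n x : ℝ) • f x) Filter.atTop
      (nhds (s.indicator f x)) := by
    have happr := tendsto_pi_nhds.1 (HasOuterApproxClosed.tendsto_apprSeq hs) x
    convert (NNReal.tendsto_coe.2 happr).smul_const (f x) using 2
    by_cases hx : x ∈ s <;> simp [hx]
  have hmeas (n : ℕ) : AEStronglyMeasurable (fun x => (hs.apprSeq n x : ℝ) • f x) μ :=
    (NNReal.continuous_coe.comp (hs.apprSeq n).continuous).measurable.aestronglyMeasurable.smul
      hf.aestronglyMeasurable
  have hbound (n : ℕ) (x : X) : ‖(hs.apprSeq n x : ℝ) • f x‖ ≤ ‖f x‖ := by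
    rw [norm_smul, NNReal.norm_eq]
    exact mul_le_of_le_one_left (norm_nonneg _)
      (NNReal.coe_le_one.2 (HasOuterApproxClosed.apprSeq_apply_le_one hs n x))
  rw [← integral_indicator hs.measurableSet]
  exact tendsto_nhds_unique (tendsto_integral_of_dominated_convergence (‖f ·‖) hmeas hf.norm
    (fun n => .of_forall (hbound n)) (.of_forall hlim)) (by simp only [h, tendsto_const_nhds])

open AddCircle

variable {T : ℝ} [Fact (0 < T)]

lemma integral_mul_eq_zero_of_fourierCoeff_eq_zero {f : AddCircle T → ℂ}
    (hf : Integrable f haarAddCircle) (h : ∀ n, fourierCoeff f n = 0) (φ : C(AddCircle T, ℂ)) :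
    ∫ x, φ x * f x ∂haarAddCircle = 0 := by
  have hint (ψ : C(AddCircle T, ℂ)) : Integrable (fun x => ψ x * f x) haarAddCircle :=
    hf.bdd_mul ψ.continuous.aestronglyMeasurable (.of_forall ψ.norm_coe_le_norm)
  let pairing : C(AddCircle T, ℂ) →ₗ[ℂ] ℂ :=
    { toFun := fun ψ => ∫ x, ψ x * f x ∂haarAddCircle
      map_add' := fun ψ χ => by
        simp only [ContinuousMap.add_apply, add_mul, integral_add (hint ψ) (hint χ)]
      map_smul' := fun c ψ => by
        simp only [ContinuousMap.smul_apply, smul_eq_mul, mul_assoc, integral_const_mul,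
          RingHom.id_apply] }
  have hbound (ψ : C(AddCircle T, ℂ)) : ‖pairing ψ‖ ≤ (∫ x, ‖f x‖ ∂haarAddCircle) * ‖ψ‖ := by
    rw [mul_comm, ← integral_const_mul]
    refine norm_integral_le_of_norm_le (hf.norm.const_mul _) (.of_forall fun x => ?_)
    rw [norm_mul]
    gcongr
    exact ψ.norm_coe_le_norm x
  let L := pairing.mkContinuous _ hbound
  have hker : (⊤ : Submodule ℂ C(AddCircle T, ℂ)) ≤ L.toLinearMap.ker := by
    rw [← span_fourier_closure_eq_top]
    refine Submodule.topologicalClosure_minimal _ (Submodule.span_le.2 ?_) L.isClosed_ker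
    rintro _ ⟨n, rfl⟩
    change ∫ x, fourier n x * f x ∂haarAddCircle = 0
    simpa only [fourierCoeff, neg_neg, smul_eq_mul] using h (-n)
  exact hker Submodule.mem_top

lemma ae_eq_of_fourierCoeff_eq {f g : AddCircle T → ℂ} (hf : Integrable f haarAddCircle)
    (hg : Integrable g haarAddCircle) (h : fourierCoeff f = fourierCoeff g) :
    f =ᵐ[haarAddCircle] g := by
  have hsub (n : ℤ) : fourierCoeff (f - g) n = 0 := by
    have hadd : fourierCoeff (f - g) + fourierCoeff g = fourierCoeff f := by
      rw [← fourierCoeff.add (hf.sub hg) hg, sub_add_cancel]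
    exact congrFun (add_eq_right.1 (hadd.trans h)) n
  refine (sub_ae_eq_zero f g).1 ?_
  exact ae_eq_zero_of_forall_integral_boundedContinuous_smul_eq_zero (hf.sub hg) fun φ =>
    integral_mul_eq_zero_of_fourierCoeff_eq_zero (hf.sub hg) hsub
      ⟨fun x => ((φ x : ℝ) : ℂ),
        Complex.continuous_ofReal.comp (NNReal.continuous_coe.comp φ.continuous)⟩

lemma memLp_two_of_summable_sq_norm_fourierCoeff {f : AddCircle T → ℂ}
    (hf : Integrable f haarAddCircle) (hsum : Summable fun n => ‖fourierCoeff f n‖ ^ 2) :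
    MemLp f 2 haarAddCircle := by
  have hmem : Memℓp (fourierCoeff f) 2 := memℓp_gen (by simpa using hsum)
  let g : Lp ℂ 2 (haarAddCircle (T := T)) := fourierBasis.repr.symm ⟨fourierCoeff f, hmem⟩
  have hg : fourierCoeff g = fourierCoeff f := by
    ext n
    simp [← fourierBasis_repr, g]
  have hg_int : Integrable g haarAddCircle := (Lp.memLp g).integrable one_le_two
  exact (memLp_congr_ae (ae_eq_of_fourierCoeff_eq hg_int hf hg)).1 (Lp.memLp g)

lemma fourierCoeff_star (f : AddCircle T → ℂ) (n : ℤ) :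
    fourierCoeff (star f) n = star (fourierCoeff f (-n)) := by
  simp only [fourierCoeff, smul_eq_mul, Pi.star_apply, Complex.star_def, ← integral_conj, map_mul,
    neg_neg, fourier_neg]

lemma hasSum_fourierCoeff_mul_fourierCoeff_neg {f g : AddCircle T → ℂ}
    (hf : MemLp f 2 haarAddCircle) (hg : MemLp g 2 haarAddCircle) :
    HasSum (fun n => fourierCoeff f n * fourierCoeff g (-n)) (∫ x, f x * g x ∂haarAddCircle) := by
  have hcoeff {u : AddCircle T → ℂ} (hu : MemLp u 2 haarAddCircle) (n : ℤ) :
      inner ℂ (fourierBasis n) (hu.toLp u) = fourierCoeff u n := by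
    rw [← fourierBasis.repr_apply_apply, fourierBasis_repr, fourierCoeff_congr_ae hu.coeFn_toLp]
  have hparseval := fourierBasis.hasSum_inner_mul_inner (hg.star.toLp _) (hf.toLp f)
  have hinner : inner ℂ (hg.star.toLp _) (hf.toLp f) = ∫ x, f x * g x ∂haarAddCircle := by
    rw [L2.inner_def]
    refine integral_congr_ae ?_
    filter_upwards [hf.coeFn_toLp, hg.star.coeFn_toLp] with x hfx hgx
    simp [hfx, hgx]
  have hterm (n : ℤ) : inner ℂ (hg.star.toLp _) (fourierBasis n) *
      inner ℂ (fourierBasis n) (hf.toLp f) = fourierCoeff f n * fourierCoeff g (-n) := by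
    rw [← inner_conj_symm, hcoeff, hcoeff, fourierCoeff_star, Complex.star_def, Complex.conj_conj,
      mul_comm]
  simpa only [hterm, hinner] using hparseval

local instance fact_two_pi_pos : Fact (0 < 2 * π) := ⟨two_pi_pos⟩

lemma fourierCoeff_liftIoc_two_pi (f : ℝ → ℂ) (n : ℤ) :
    fourierCoeff (liftIoc (2 * π) 0 f) n = fourierCoef f n := by
  have hpi : (π : ℂ) ≠ 0 := by exact_mod_cast pi_ne_zero
  rw [fourierCoeff_liftIoc_eq, fourierCoeffOn_eq_integral, fourierCoef]
  simp only [zero_add, sub_zero, fourier_coe_apply, smul_eq_mul, Complex.real_smul]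
  push_cast
  congr 2 with t
  rw [mul_comm]
  congr 2
  field_simp

lemma hasSum_fourierCoef_mul_sincKernel {f : ℝ → ℂ} (hf : IntervalIntegrable f volume 0 (2 * π))
    (hsum : Summable fun k => ‖fourierCoef f k‖ ^ 2) (y : ℝ) :
    HasSum (fun m : ℤ => fourierCoef f m * sincKernel (y - m)) (realFourierCoef f y) := by
  let e : ℝ → ℂ := fun t => Complex.exp (-Complex.I * y * t)
  have hF : Integrable (liftIoc (2 * π) 0 f) haarAddCircle := by
    rw [intervalIntegrable_iff_integrableOn_Ioc_of_le two_pi_pos.le, ← zero_add (2 * π)] at hf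
    exact memLp_one_iff_integrable.1 (memLp_one_iff_integrable.2 hf).memLp_liftIoc.haarAddCircle
  have hE : MemLp (liftIoc (2 * π) 0 e) 2 haarAddCircle := by
    refine (MemLp.memLp_liftIoc (.of_bound ?_ 1 ?_)).haarAddCircle
    · fun_prop
    · exact .of_forall fun t => (norm_exp_neg_I_mul_mul y t).le
  have hcoeffE (m : ℤ) : fourierCoeff (liftIoc (2 * π) 0 e) (-m) = sincKernel (y - m) := by
    rw [fourierCoeff_liftIoc_two_pi, fourierCoef, sincKernel, realFourierCoef]
    congr 2 with t
    rw [Pi.one_apply, one_mul, ← Complex.exp_add]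
    congr 1
    push_cast
    ring
  have hprod : ∫ x, liftIoc (2 * π) 0 f x * liftIoc (2 * π) 0 e x ∂haarAddCircle =
      realFourierCoef f y := by
    have hlift : ∫ x, liftIoc (2 * π) 0 f x * liftIoc (2 * π) 0 e x =
        ∫ t in (0 : ℝ)..(2 * π), f t * e t := by
      have := integral_liftIoc_eq_intervalIntegral (2 * π) (t := 0) (f := f * e)
      rwa [zero_add] at this
    rw [integral_haarAddCircle, hlift, Complex.real_smul, realFourierCoef]
    push_cast
    rw [one_div]
  have hF2 := memLp_two_of_summable_sq_norm_fourierCoeff hF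
    (by simpa only [fourierCoeff_liftIoc_two_pi] using hsum)
  simpa only [hcoeffE, hprod, fourierCoeff_liftIoc_two_pi] using
    hasSum_fourierCoeff_mul_fourierCoeff_neg hF2 hE

end FourierRepresentation

section Modulation

/-- Modulation of `f` by the real frequency `δ`. It translates `realFourierCoef f` by `δ`. For
`δ ∉ ℤ` the modulating exponential is not periodic, so it jumps at the endpoints of `[0, 2π]`. -/
noncomputable def modulate (δ : ℝ) (f : ℝ → ℂ) (t : ℝ) : ℂ :=
  f t * Complex.exp (-Complex.I * δ * t)

lemma realFourierCoef_modulate (δ : ℝ) (f : ℝ → ℂ) (y : ℝ) :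
    realFourierCoef (modulate δ f) y = realFourierCoef f (δ + y) := by
  rw [realFourierCoef, realFourierCoef]
  congr 2 with t
  rw [modulate, mul_assoc, ← Complex.exp_add]
  congr 2
  push_cast
  ring

lemma modulate_neg_modulate (δ : ℝ) (f : ℝ → ℂ) : modulate (-δ) (modulate δ f) = f := by
  ext t
  rw [modulate, modulate, mul_assoc, ← Complex.exp_add]
  simp

lemma intervalIntegrable_modulate {f : ℝ → ℂ} {a b : ℝ} (hf : IntervalIntegrable f volume a b)
    (δ : ℝ) : IntervalIntegrable (modulate δ f) volume a b :=
  hf.mul_continuousOn (by fun_prop)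

lemma ApNorm_rpow {p : ℝ} (hp : p ≠ 0) (f : ℝ → ℂ) :
    ApNorm p f ^ p = ∑' k : ℤ, ‖fourierCoef f k‖ₑ ^ p := by
  rw [ApNorm, ← ENNReal.rpow_mul, one_div_mul_cancel hp, ENNReal.rpow_one]
  rfl

lemma exists_sum_norm_realFourierCoef_rpow_le {p : ℝ} (hp1 : 1 < p) (hp2 : p ≤ 2) :
    ∃ C : ℝ, 0 ≤ C ∧ ∀ (f : ℝ → ℂ), IntervalIntegrable f volume 0 (2 * π) →
      Summable (fun k => ‖fourierCoef f k‖ ^ p) → ∀ (δ : ℝ) (K : Finset ℤ),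
        ∑ k ∈ K, ‖realFourierCoef f (δ + k)‖ ^ p ≤ C * ∑' k, ‖fourierCoef f k‖ ^ p := by
  obtain ⟨C, hC, h⟩ := exists_sum_norm_sum_mul_sincKernel_rpow_le hp1 hp2
  refine ⟨C, hC, fun f hf hsum δ K => ?_⟩
  have hp0 : 0 < p := by linarith
  have hsum2 : Summable fun k => ‖fourierCoef f k‖ ^ 2 := by
    have hmem : Memℓp (fourierCoef f) (ENNReal.ofReal p) :=
      memℓp_gen (by rwa [ENNReal.toReal_ofReal hp0.le])
    have hmem2 : Memℓp (fourierCoef f) 2 := hmem.of_exponent_ge (by simpa using hp2)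
    simpa using hmem2.summable (by simp)
  have hlim : Filter.Tendsto
      (fun s => ∑ k ∈ K, ‖∑ m ∈ s, fourierCoef f m * sincKernel (δ + k - m)‖ ^ p) Filter.atTop
      (nhds (∑ k ∈ K, ‖realFourierCoef f (δ + k)‖ ^ p)) :=
    tendsto_finsetSum K fun k _ =>
      (hasSum_fourierCoef_mul_sincKernel hf hsum2 (δ + k)).norm.rpow_const (.inr hp0.le)
  refine le_of_tendsto' hlim fun s => (h δ K s (fourierCoef f)).trans ?_
  gcongr
  exact hsum.sum_le_tsum s fun k _ => by positivity

lemma exists_ApNorm_modulate_le {p : ℝ} (hp1 : 1 < p) (hp2 : p ≤ 2) :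
    ∃ C : ℝ, 0 < C ∧ ∀ (f : ℝ → ℂ), IntervalIntegrable f volume 0 (2 * π) →
      ∀ δ : ℝ, ApNorm p (modulate δ f) ≤ ENNReal.ofReal C * ApNorm p f := by
  obtain ⟨C, hC, h⟩ := exists_sum_norm_realFourierCoef_rpow_le hp1 hp2
  refine ⟨(C + 1) ^ p⁻¹, by positivity, fun f hf δ => ?_⟩
  have hp0 : 0 < p := by linarith
  have henorm (z : ℂ) : ‖z‖ₑ ^ p = ENNReal.ofReal (‖z‖ ^ p) := by
    rw [← ofReal_norm, ENNReal.ofReal_rpow_of_nonneg (norm_nonneg z) hp0.le]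
  rcases eq_or_ne (ApNorm p f) ∞ with htop | htop
  · rw [htop, ENNReal.mul_top (by simpa using by positivity)]
    exact le_top
  have hpow := ApNorm_rpow hp0.ne' f
  have hsum : Summable fun k => ‖fourierCoef f k‖ ^ p := by
    have hne : ∑' k, ‖fourierCoef f k‖ₑ ^ p ≠ ∞ :=
      hpow ▸ ENNReal.rpow_ne_top_of_nonneg hp0.le htop
    refine (ENNReal.summable_toReal hne).congr fun k => ?_
    rw [← ENNReal.toReal_rpow, toReal_enorm]
  rw [← ENNReal.rpow_le_rpow_iff hp0, ENNReal.mul_rpow_of_nonneg _ _ hp0.le, hpow,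
    ApNorm_rpow hp0.ne', ENNReal.tsum_eq_iSup_sum,
    ENNReal.ofReal_rpow_of_nonneg (by positivity) hp0.le, rpow_inv_rpow (by positivity) hp0.ne']
  refine iSup_le fun K => ?_
  simp only [henorm, fourierCoef_eq_realFourierCoef (modulate δ f), realFourierCoef_modulate]
  rw [← ENNReal.ofReal_tsum_of_nonneg (fun k => by positivity) hsum,
    ← ENNReal.ofReal_sum_of_nonneg (fun k _ => by positivity),
    ← ENNReal.ofReal_mul (by positivity)]
  refine ENNReal.ofReal_le_ofReal ((h f hf hsum δ K).trans ?_)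
  gcongr
  exact le_add_of_nonneg_right zero_le_one

end Modulation

section Sampling

lemma lintegral_eq_setLIntegral_tsum_add_intCast {g : ℝ → ℝ≥0∞} (hg : Measurable g) :
    ∫⁻ y, g y = ∫⁻ δ in Ioc (0 : ℝ) 1, ∑' k : ℤ, g (δ + k) := by
  have hshift (k : ℤ) :
      ∫⁻ δ in Ioc (0 : ℝ) 1, g (δ + k) = ∫⁻ y in Ioc (0 + (k : ℝ)) (0 + k + 1), g y := by
    rw [← (measurePreserving_add_right volume (k : ℝ)).setLIntegral_comp_preimage_emb
      (MeasurableEquiv.addRight (k : ℝ)).measurableEmbedding g, preimage_add_const_Ioc]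
    simp
  rw [lintegral_tsum fun k => by fun_prop]
  simp only [hshift]
  rw [← lintegral_iUnion (fun k => measurableSet_Ioc) (pairwise_disjoint_Ioc_add_intCast 0),
    iUnion_Ioc_add_intCast, setLIntegral_univ]

lemma continuous_realFourierCoef {f : ℝ → ℂ} (hf : IntervalIntegrable f volume 0 (2 * π)) :
    Continuous (realFourierCoef f) := by
  refine continuous_const.mul (intervalIntegral.continuous_of_dominated_interval
    (bound := fun t => ‖f t‖) (fun y => ?_) (fun y => .of_forall fun t _ => ?_) hf.norm
    (.of_forall fun t _ => by fun_prop))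
  · exact (intervalIntegrable_iff.1 (intervalIntegrable_modulate hf y)).aestronglyMeasurable
  · rw [norm_mul, norm_exp_neg_I_mul_mul, mul_one]

lemma eLpNorm_realFourierCoef_rpow {p : ℝ} (hp : 0 < p) {f : ℝ → ℂ}
    (hf : IntervalIntegrable f volume 0 (2 * π)) :
    eLpNorm (realFourierCoef f) (ENNReal.ofReal p) volume ^ p =
      ∫⁻ δ in Ioc (0 : ℝ) 1, ApNorm p (modulate δ f) ^ p := by
  have hmeas : Measurable fun y => ‖realFourierCoef f y‖ₑ ^ p :=
    (continuous_realFourierCoef hf).measurable.enorm.pow_const p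
  rw [eLpNorm_eq_lintegral_rpow_enorm_toReal (by simpa) ENNReal.ofReal_ne_top,
    ENNReal.toReal_ofReal hp.le, ← ENNReal.rpow_mul, one_div_mul_cancel hp.ne', ENNReal.rpow_one,
    lintegral_eq_setLIntegral_tsum_add_intCast hmeas]
  simp only [ApNorm_rpow hp.ne', fourierCoef_eq_realFourierCoef, realFourierCoef_modulate]

lemma exists_ApNorm_le_eLpNorm_and_eLpNorm_le_ApNorm {p : ℝ} (hp1 : 1 < p) (hp2 : p ≤ 2) :
    ∃ C : ℝ, 0 < C ∧ ∀ (f : ℝ → ℂ), IntervalIntegrable f volume 0 (2 * π) →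
      ApNorm p f ≤ ENNReal.ofReal C * eLpNorm (realFourierCoef f) (ENNReal.ofReal p) volume ∧
      eLpNorm (realFourierCoef f) (ENNReal.ofReal p) volume ≤ ENNReal.ofReal C * ApNorm p f := by
  obtain ⟨C, hC, h⟩ := exists_ApNorm_modulate_le hp1 hp2
  refine ⟨C, hC, fun f hf => ?_⟩
  have hp0 : 0 < p := by linarith
  have hconst (x : ℝ≥0∞) : ∫⁻ _ in Ioc (0 : ℝ) 1, x ^ p = x ^ p := by simp
  constructor
  · rw [← ENNReal.rpow_le_rpow_iff hp0, ENNReal.mul_rpow_of_nonneg _ _ hp0.le,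
      eLpNorm_realFourierCoef_rpow hp0 hf, ← hconst (ApNorm p f),
      ← lintegral_const_mul' _ _ (by simp [hp0.le])]
    refine lintegral_mono fun δ => ?_
    rw [← ENNReal.mul_rpow_of_nonneg _ _ hp0.le]
    gcongr
    simpa only [modulate_neg_modulate] using h _ (intervalIntegrable_modulate hf δ) (-δ)
  · rw [← ENNReal.rpow_le_rpow_iff hp0, eLpNorm_realFourierCoef_rpow hp0 hf, ← hconst (_ * _)]
    exact lintegral_mono fun δ => ENNReal.rpow_le_rpow (h f hf δ) hp0.le

end Sampling

section AffineScaling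

lemma eLpNorm_comp_mul_left {E : Type*} [NormedAddCommGroup E] {p : ℝ≥0∞} (hp : p ≠ ∞)
    (g : ℝ → E) {a : ℝ} (ha : a ≠ 0) :
    eLpNorm (fun x => g (a * x)) p volume =
      ENNReal.ofReal |a⁻¹| ^ (1 / p).toReal * eLpNorm g p volume := by
  rw [← smul_eq_mul, ← eLpNorm_smul_measure_of_ne_top hp, ← Real.map_volume_mul_left ha,
    (measurableEmbedding_mulLeft₀ ha).eLpNorm_map_measure]
  rfl

lemma realFourierCoef_eq_integral_indicator (f : ℝ → ℂ) (y : ℝ) :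
    realFourierCoef f y = (1 / (2 * (π : ℂ))) *
      ∫ t, (Icc 0 (2 * π)).indicator f t * Complex.exp (-Complex.I * y * t) := by
  have hmul (t : ℝ) : (Icc 0 (2 * π)).indicator f t * Complex.exp (-Complex.I * y * t) =
      (Icc 0 (2 * π)).indicator (fun t => f t * Complex.exp (-Complex.I * y * t)) t :=
    (indicator_mul_left _ f fun t : ℝ => Complex.exp (-Complex.I * y * t)).symm
  simp only [hmul]
  rw [integral_indicator measurableSet_Icc, integral_Icc_eq_integral_Ioc,
    ← intervalIntegral.integral_of_le two_pi_pos.le, realFourierCoef]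

lemma indicator_eq_indicator_of_forall_diff_eq_zero {X M : Type*} [Zero M] {S E : Set X}
    {f : X → M} (hE : E ⊆ S) (hf : ∀ x ∈ S \ E, f x = 0) : S.indicator f = E.indicator f := by
  ext x
  by_cases hx : x ∈ E
  · rw [indicator_of_mem hx, indicator_of_mem (hE hx)]
  · rw [indicator_of_notMem hx, indicator_apply_eq_zero]
    exact fun hxS => hf x ⟨hxS, hx⟩

variable {a b : ℝ} {U V : ℝ → ℂ}

lemma indicator_eq_indicator_comp_affine {E F S : Set ℝ} (ha : a ≠ 0) (hE : E ⊆ S) (hF : F ⊆ S)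
    (himage : (fun t => a * t + b) '' E = F) (hU : ∀ t ∈ S \ E, U t = 0)
    (hV : ∀ t ∈ S \ F, V t = 0) (hUV : ∀ t ∈ E, U t = V (a * t + b)) (t : ℝ) :
    S.indicator U t = S.indicator V (a * t + b) := by
  have hinj : Function.Injective fun t : ℝ => a * t + b :=
    (add_left_injective b).comp (mul_right_injective₀ ha)
  have hmem : a * t + b ∈ F ↔ t ∈ E := himage ▸ hinj.mem_set_image
  rw [indicator_eq_indicator_of_forall_diff_eq_zero hE hU,
    indicator_eq_indicator_of_forall_diff_eq_zero hF hV]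
  by_cases ht : t ∈ E
  · rw [indicator_of_mem ht, indicator_of_mem (hmem.2 ht), hUV t ht]
  · rw [indicator_of_notMem ht, indicator_of_notMem (hmem.not.2 ht)]

lemma intervalIntegrable_of_indicator_eq_comp_affine (ha : a ≠ 0)
    (hUV : ∀ t, (Icc 0 (2 * π)).indicator U t = (Icc 0 (2 * π)).indicator V (a * t + b))
    (hV : IntervalIntegrable V volume 0 (2 * π)) : IntervalIntegrable U volume 0 (2 * π) := by
  rw [intervalIntegrable_iff_integrableOn_Icc_of_le two_pi_pos.le,
    ← integrable_indicator_iff measurableSet_Icc] at hV ⊢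
  rw [funext hUV]
  exact (hV.comp_add_right b).comp_mul_left' ha

lemma norm_realFourierCoef_eq_of_indicator_eq_comp_affine (ha : a ≠ 0)
    (hUV : ∀ t, (Icc 0 (2 * π)).indicator U t = (Icc 0 (2 * π)).indicator V (a * t + b)) (y : ℝ) :
    ‖realFourierCoef U y‖ = ‖a⁻¹ • realFourierCoef V (a⁻¹ * y)‖ := by
  let G : ℝ → ℂ := fun s =>
    (Icc 0 (2 * π)).indicator V s * Complex.exp (-Complex.I * (a⁻¹ * y : ℝ) * s)
  have ha' : (a : ℂ) ≠ 0 := by exact_mod_cast ha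
  have hphase (t : ℝ) : (Icc 0 (2 * π)).indicator U t * Complex.exp (-Complex.I * y * t) =
      Complex.exp (-Complex.I * (a⁻¹ * y : ℝ) * (-b : ℝ)) * G (a * t + b) := by
    rw [hUV, mul_left_comm, ← Complex.exp_add]
    congr 2
    push_cast
    field_simp
    ring
  have hsubst : ∫ t, G (a * t + b) = |a⁻¹| • ∫ s, G s := by
    rw [Measure.integral_comp_mul_left (fun s => G (s + b)), integral_add_right_eq_self]
  rw [realFourierCoef_eq_integral_indicator, realFourierCoef_eq_integral_indicator]
  simp only [hphase]
  rw [integral_const_mul, hsubst, norm_mul, norm_mul, norm_exp_neg_I_mul_mul, one_mul, norm_smul,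
    norm_smul, norm_mul, Real.norm_eq_abs, abs_abs,
    ← Real.norm_eq_abs, mul_left_comm]

lemma eLpNorm_realFourierCoef_eq_of_indicator_eq_comp_affine {p q : ℝ} (hp : 1 ≤ p)
    (hpq : 1 / p + 1 / q = 1) (ha : a ≠ 0)
    (hUV : ∀ t, (Icc 0 (2 * π)).indicator U t = (Icc 0 (2 * π)).indicator V (a * t + b)) :
    eLpNorm (realFourierCoef U) (ENNReal.ofReal p) volume =
      ENNReal.ofReal (|a| ^ (-(1 / q))) *
        eLpNorm (realFourierCoef V) (ENNReal.ofReal p) volume := by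
  have hp0 : 0 < p := by linarith
  have ha0 : 0 < |a| := abs_pos.2 ha
  have hexp : |a⁻¹| * |a| ^ (1 / p) = |a| ^ (-(1 / q)) := by
    rw [abs_inv, ← rpow_neg_one, ← rpow_add ha0]
    congr 1
    linarith
  calc eLpNorm (realFourierCoef U) (ENNReal.ofReal p) volume
      = eLpNorm (a⁻¹ • fun y => realFourierCoef V (a⁻¹ * y)) (ENNReal.ofReal p) volume :=
        eLpNorm_congr_norm_ae (.of_forall
          (norm_realFourierCoef_eq_of_indicator_eq_comp_affine ha hUV))
    _ = ENNReal.ofReal |a⁻¹| * (ENNReal.ofReal |a| ^ (1 / p) *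
          eLpNorm (realFourierCoef V) (ENNReal.ofReal p) volume) := by
        rw [eLpNorm_const_smul, eLpNorm_comp_mul_left ENNReal.ofReal_ne_top _ (inv_ne_zero ha)]
        simp [hp0.le, Real.enorm_eq_ofReal_abs]
    _ = ENNReal.ofReal (|a| ^ (-(1 / q))) *
          eLpNorm (realFourierCoef V) (ENNReal.ofReal p) volume := by
        rw [← mul_assoc, ENNReal.ofReal_rpow_of_pos ha0, ← ENNReal.ofReal_mul (abs_nonneg _), hexp]

end AffineScaling

theorem statement13_general {p q : ℝ} (hp1 : 1 < p) (hp2 : p ≤ 2) (hpq : 1 / p + 1 / q = 1) :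
    ∃ c : ℝ, 0 < c ∧ ∀ (a b : ℝ) (E F : Set ℝ) (U V : ℝ → ℂ), a ≠ 0 →
      E ⊆ Icc 0 (2 * π) → F ⊆ Icc 0 (2 * π) → (fun t => a * t + b) '' E = F →
      (∀ t ∈ Icc 0 (2 * π) \ E, U t = 0) → (∀ t ∈ Icc 0 (2 * π) \ F, V t = 0) →
      (∀ t ∈ E, U t = V (a * t + b)) → IntervalIntegrable V volume 0 (2 * π) →
      ApNorm p U ≤ ENNReal.ofReal (c * |a| ^ (-(1 / q))) * ApNorm p V := by
  obtain ⟨C, hC, hequiv⟩ := exists_ApNorm_le_eLpNorm_and_eLpNorm_le_ApNorm hp1 hp2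
  refine ⟨C * C, by positivity, fun a b E F U V ha hE hF himage hU hV hUV hVint => ?_⟩
  have hind := indicator_eq_indicator_comp_affine ha hE hF himage hU hV hUV
  have hUint := intervalIntegrable_of_indicator_eq_comp_affine ha hind hVint
  have hscale := eLpNorm_realFourierCoef_eq_of_indicator_eq_comp_affine hp1.le hpq ha hind
  calc ApNorm p U
      ≤ ENNReal.ofReal C * eLpNorm (realFourierCoef U) (ENNReal.ofReal p) volume :=
        (hequiv U hUint).1
    _ ≤ ENNReal.ofReal C *
          (ENNReal.ofReal (|a| ^ (-(1 / q))) * (ENNReal.ofReal C * ApNorm p V)) := by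
        rw [hscale]
        gcongr
        exact (hequiv V hVint).2
    _ = ENNReal.ofReal (C * C * |a| ^ (-(1 / q))) * ApNorm p V := by
        rw [ENNReal.ofReal_mul (by positivity), ENNReal.ofReal_mul hC.le]
        ring

/-- Lemma 8: if U, V ∈ A_p(𝕋) are supported on intervals I, J ⊆ [0,2π]
and U = V ∘ l on I for an affine map l of I onto J with tangent coefficient a, then
‖U‖_{A_p} ≤ c_p·|a|^{-1/q}·‖V‖_{A_p}. -/
theorem statement13
    (p q : ℝ) (hp1 : 1 < p) (hp2 : p < 2) (hq : 1 / p + 1 / q = 1) :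
    ∃ c : ℝ, 0 < c ∧
      ∀ (a b u₁ v₁ u₂ v₂ : ℝ) (U V : ℝ → ℂ),
        a ≠ 0 → u₁ ≤ v₁ →
        Icc u₁ v₁ ⊆ Icc 0 (2 * Real.pi) →
        Icc u₂ v₂ ⊆ Icc 0 (2 * Real.pi) →
        -- l(t) = a·t + b maps I = [u₁,v₁] onto J = [u₂,v₂]
        ((fun t => a * t + b) '' Icc u₁ v₁ = Icc u₂ v₂) →
        -- U and V vanish outside I and J respectively
        (∀ t ∈ Icc 0 (2 * Real.pi) \ Icc u₁ v₁, U t = 0) →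
        (∀ t ∈ Icc 0 (2 * Real.pi) \ Icc u₂ v₂, V t = 0) →
        -- U = V ∘ l on I
        (∀ t ∈ Icc u₁ v₁, U t = V (a * t + b)) →
        IntervalIntegrable U volume 0 (2 * Real.pi) →
        IntervalIntegrable V volume 0 (2 * Real.pi) →
        ApNorm p U ≤ ENNReal.ofReal (c * |a| ^ (-(1 / q))) * ApNorm p V := by
  obtain ⟨c, hc, h⟩ := statement13_general hp1 hp2.le hq
  exact ⟨c, hc, fun a b u₁ v₁ u₂ v₂ U V ha _ hI hJ hl hU hV hUV _ hVint =>
    h a b (Icc u₁ v₁) (Icc u₂ v₂) U V ha hI hJ hl hU hV hUV hVint⟩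
end

section
/- Let 1 ≤ p < 2. Let φ: ℝ → ℝ be a C^{1,ω}-smooth map of the circle into itself, i.e., φ is continuously differentiable with φ′ ∈ Lip_ω(ℝ) and φ(t + 2π) = φ(t) (mod 2π). Suppose φ is nonlinear (not of the form φ(t) = mt + t₀). Then there exists c_p > 0 such that ‖e^{inφ}‖_{A_p(𝕋)} ≥ c_p · |n|^{1/p} · χ^{-1}(1/|n|) for all nonzero integers n, where χ^{-1} is the inverse function of χ(δ) = δ·ω(δ). -/
open MeasureTheory Real Set
open scoped ENNReal

/-!
Near a point `x` where `n φ'(x)` is within `1` of an integer `k`, the modulus of continuity of `φ'`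
keeps the phase `n φ(t) - k t` within `1` of a constant on a `δ`-neighbourhood of `x`, where `δ` is
comparable to `χ⁻¹(1 / |n|)`. Localizing `e^{inφ}` there by a translate of `cos (s / 2) ^ (2m)`,
with `m` comparable to `δ⁻²`, therefore produces a function whose `k`-th Fourier coefficient has
modulus at least a multiple of `δ`. Since that kernel is a convex combination of characters,
the moduli of the Fourier coefficients after localizing are dominated by an average of translates
of the original moduli. The average is the same for every `x`, so even when `x` depends on `k` the
`ℓ^p` norm does not increase. As `φ'` is not constant, at least a multiple of `|n|` integers `k`
arise in this way.
-/

/-! ### Multiplication by trigonometric polynomials -/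

lemma tsum_rpow_sum_mul_translate_le {G ι : Type*} [AddGroup G] {p : ℝ} (hp : 1 ≤ p)
    (s : Finset ι) (w : ι → ℝ≥0∞) (hw : ∑ i ∈ s, w i = 1) (a : ι → G) (g : G → ℝ≥0∞) :
    ∑' k, (∑ i ∈ s, w i * g (k - a i)) ^ p ≤ ∑' k, g k ^ p :=
  calc ∑' k, (∑ i ∈ s, w i * g (k - a i)) ^ p
      ≤ ∑' k, ∑ i ∈ s, w i * g (k - a i) ^ p :=
        ENNReal.tsum_le_tsum fun k ↦ ENNReal.rpow_arith_mean_le_arith_mean_rpow s w _ hw hp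
    _ = ∑ i ∈ s, w i * ∑' k, g (k - a i) ^ p := by
        rw [Summable.tsum_finsetSum fun _ _ ↦ ENNReal.summable]
        simp only [ENNReal.tsum_mul_left]
    _ = ∑ i ∈ s, w i * ∑' k, g k ^ p := by
        congr! 2 with i
        exact (Equiv.subRight (a i)).tsum_eq fun k ↦ g k ^ p
    _ = ∑' k, g k ^ p := by rw [← Finset.sum_mul, hw, one_mul]

lemma fourierCoef_mul_exp (f : ℝ → ℂ) (j k : ℤ) :
    fourierCoef (fun t ↦ f t * Complex.exp (Complex.I * j * t)) k = fourierCoef f (k - j) := by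
  have hexp (t : ℝ) : Complex.exp (Complex.I * j * t) * Complex.exp (-Complex.I * k * t) =
      Complex.exp (-Complex.I * (k - j : ℤ) * t) := by
    rw [← Complex.exp_add]
    push_cast
    ring_nf
  simp only [fourierCoef, mul_assoc (f _), hexp]

lemma fourierCoef_const_mul (c : ℂ) (f : ℝ → ℂ) (k : ℤ) :
    fourierCoef (fun t ↦ c * f t) k = c * fourierCoef f k := by
  simp only [fourierCoef, mul_assoc, intervalIntegral.integral_const_mul]
  ring

lemma fourierCoef_finset_sum {ι : Type*} (s : Finset ι) {f : ι → ℝ → ℂ}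
    (hf : ∀ i ∈ s, IntervalIntegrable (f i) volume 0 (2 * π)) (k : ℤ) :
    fourierCoef (fun t ↦ ∑ i ∈ s, f i t) k = ∑ i ∈ s, fourierCoef (f i) k := by
  simp only [fourierCoef, Finset.sum_mul, ← Finset.mul_sum]
  rw [intervalIntegral.integral_finsetSum fun i hi ↦ (hf i hi).mul_continuousOn (by fun_prop)]

lemma enorm_fourierCoef_mul_trigPoly_le {ι : Type*} (s : Finset ι) (c : ι → ℂ) (a : ι → ℤ)
    {f : ℝ → ℂ} (hf : IntervalIntegrable f volume 0 (2 * π)) (k : ℤ) :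
    ‖fourierCoef (fun t ↦ f t * ∑ i ∈ s, c i * Complex.exp (Complex.I * a i * t)) k‖ₑ ≤
      ∑ i ∈ s, ‖c i‖ₑ * ‖fourierCoef f (k - a i)‖ₑ := by
  have expand : fourierCoef (fun t ↦ f t * ∑ i ∈ s, c i * Complex.exp (Complex.I * a i * t)) k =
      ∑ i ∈ s, c i * fourierCoef f (k - a i) := by
    simp only [Finset.mul_sum, mul_left_comm (f _)]
    rw [fourierCoef_finset_sum s fun i _ ↦ (hf.mul_continuousOn (by fun_prop)).const_mul (c i)]
    simp only [fourierCoef_const_mul, fourierCoef_mul_exp]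
  rw [expand]
  exact (enorm_sum_le _ _).trans_eq (by simp only [enorm_mul])

/-! ### The localizing kernel -/

/-- The kernel localizing to a neighbourhood of size comparable to `m ^ (-1/2)` of the origin of
the circle. The even exponent makes it nonnegative and `2π`-periodic. -/
noncomputable def cosKernel (m : ℕ) (s : ℝ) : ℝ := cos (s / 2) ^ (2 * m)

/-- The integral of `cosKernel m` over a period. -/
noncomputable def cosKernelMass (m : ℕ) : ℝ := ∫ s in (-π)..π, cosKernel m s

@[fun_prop]
lemma continuous_cosKernel (m : ℕ) : Continuous (cosKernel m) := by
  unfold cosKernel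
  fun_prop

lemma cosKernel_nonneg (m : ℕ) (s : ℝ) : 0 ≤ cosKernel m s :=
  (even_two_mul m).pow_nonneg _

lemma cosKernel_periodic (m : ℕ) : Function.Periodic (cosKernel m) (2 * π) := fun s ↦ by
  unfold cosKernel
  rw [show (s + 2 * π) / 2 = s / 2 + π by ring, cos_add_pi, (even_two_mul m).neg_pow]

lemma cosKernel_succ (m : ℕ) (s : ℝ) :
    cosKernel (m + 1) s = cosKernel m s * cos (s / 2) ^ 2 := by
  rw [cosKernel, cosKernel, mul_add_one, pow_add]

lemma cosKernel_eq_sum_exp (m : ℕ) (s : ℝ) :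
    (cosKernel m s : ℂ) = ∑ j ∈ Finset.range (2 * m + 1),
      ((2 * m).choose j / 4 ^ m : ℂ) * Complex.exp (Complex.I * (j - m : ℤ) * s) := by
  rw [cosKernel]
  push_cast
  rw [Complex.cos, div_pow, add_pow, Finset.sum_div]
  refine Finset.sum_congr rfl fun j hj ↦ ?_
  have hj' : j ≤ 2 * m := Finset.mem_range_succ_iff.mp hj
  rw [← Complex.exp_nat_mul, ← Complex.exp_nat_mul, ← Complex.exp_add, pow_mul]
  push_cast [Nat.cast_sub hj']
  ring_nf

lemma sum_enorm_choose_div_four_pow (m : ℕ) :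
    ∑ j ∈ Finset.range (2 * m + 1), ‖((2 * m).choose j / 4 ^ m : ℂ)‖ₑ = 1 := by
  have hsum : ∑ j ∈ Finset.range (2 * m + 1), ((2 * m).choose j / 4 ^ m : ℝ) = 1 := by
    rw [← Finset.sum_div, ← Nat.cast_sum, Nat.sum_range_choose, pow_mul]
    norm_num
  simp only [← ofReal_norm, norm_div, norm_pow, Complex.norm_natCast, Complex.norm_ofNat]
  rw [← ENNReal.ofReal_sum_of_nonneg fun _ _ ↦ by positivity, hsum, ENNReal.ofReal_one]

lemma enorm_fourierCoef_mul_cosKernel_le (m : ℕ) {f : ℝ → ℂ}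
    (hf : IntervalIntegrable f volume 0 (2 * π)) (x : ℝ) (k : ℤ) :
    ‖fourierCoef (fun t ↦ f t * cosKernel m (t - x)) k‖ₑ ≤
      ∑ j ∈ Finset.range (2 * m + 1),
        ‖((2 * m).choose j / 4 ^ m : ℂ)‖ₑ * ‖fourierCoef f (k - (j - m))‖ₑ := by
  have shift (j : ℕ) (t : ℝ) : Complex.exp (Complex.I * (j - m : ℤ) * (t - x : ℝ)) =
      Complex.exp ((-(j - m : ℤ) * x : ℝ) * Complex.I) *
        Complex.exp (Complex.I * (j - m : ℤ) * t) := by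
    rw [← Complex.exp_add]
    push_cast
    ring_nf
  simp only [cosKernel_eq_sum_exp, shift, ← mul_assoc _ (Complex.exp _) (Complex.exp _)]
  refine (enorm_fourierCoef_mul_trigPoly_le _ _ _ hf k).trans_eq ?_
  simp only [enorm_mul, ← ofReal_norm (Complex.exp _), Complex.norm_exp_ofReal_mul_I,
    ENNReal.ofReal_one, mul_one]

lemma card_rpow_mul_le_ApNorm {p : ℝ} (hp : 1 ≤ p) (m : ℕ) {f : ℝ → ℂ}
    (hf : IntervalIntegrable f volume 0 (2 * π)) (S : Finset ℤ) {b : ℝ}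
    (hb : ∀ k ∈ S, ∃ x, b ≤ ‖fourierCoef (fun t ↦ f t * cosKernel m (t - x)) k‖) :
    ENNReal.ofReal ((S.card : ℝ) ^ (1 / p) * b) ≤ ApNorm p f := by
  have hp0 : 0 < p := by positivity
  have hsum : S.card * ENNReal.ofReal b ^ p ≤ ∑' k, ‖fourierCoef f k‖ₑ ^ p := by
    refine le_trans ?_ (tsum_rpow_sum_mul_translate_le hp _ _ (sum_enorm_choose_div_four_pow m)
      (fun j ↦ (j - m : ℤ)) fun k ↦ ‖fourierCoef f k‖ₑ)
    rw [← nsmul_eq_mul]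
    refine (Finset.card_nsmul_le_sum S _ _ fun k hk ↦ ?_).trans (ENNReal.sum_le_tsum S)
    obtain ⟨x, hx⟩ := hb k hk
    have hx' := (ENNReal.ofReal_le_ofReal hx).trans_eq (ofReal_norm _)
    exact ENNReal.rpow_le_rpow (hx'.trans (enorm_fourierCoef_mul_cosKernel_le m hf x k)) hp0.le
  calc ENNReal.ofReal ((S.card : ℝ) ^ (1 / p) * b)
      = (S.card * ENNReal.ofReal b ^ p) ^ (1 / p) := by
        rw [ENNReal.mul_rpow_of_nonneg _ _ (by positivity), ← ENNReal.rpow_mul,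
          mul_one_div_cancel hp0.ne', ENNReal.rpow_one, ENNReal.ofReal_mul (by positivity),
          ← ENNReal.ofReal_rpow_of_nonneg (by positivity) (by positivity), ENNReal.ofReal_natCast]
    _ ≤ ApNorm p f := ENNReal.rpow_le_rpow hsum (by positivity)

lemma cosKernelMass_zero : cosKernelMass 0 = 2 * π := by
  simp [cosKernelMass, cosKernel, two_mul]

lemma cosKernelMass_eq_integral_cos_pow (m : ℕ) :
    cosKernelMass m = 2 * ∫ s in (-π / 2)..(π / 2), cos s ^ (2 * m) :=
  intervalIntegral.integral_comp_div (fun s ↦ cos s ^ (2 * m)) two_ne_zero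

lemma cosKernelMass_succ (m : ℕ) :
    cosKernelMass (m + 1) = (2 * m + 1) / (2 * m + 2) * cosKernelMass m := by
  have hcos : cos (-π / 2) = 0 := by rw [neg_div, cos_neg, cos_pi_div_two]
  simp only [cosKernelMass_eq_integral_cos_pow, mul_add_one, integral_cos_pow, hcos,
    cos_pi_div_two]
  push_cast
  ring

lemma cosKernelMass_pos (m : ℕ) : 0 < cosKernelMass m := by
  induction m with
  | zero => rw [cosKernelMass_zero]; positivity
  | succ m ih => rw [cosKernelMass_succ]; positivity

lemma pi_sq_le_mul_cosKernelMass_sq {m : ℕ} (hm : 1 ≤ m) : π ^ 2 ≤ m * cosKernelMass m ^ 2 := by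
  induction m, hm using Nat.le_induction with
  | base =>
    rw [← zero_add 1, cosKernelMass_succ, cosKernelMass_zero]
    apply le_of_eq
    push_cast
    ring
  | succ m _ ih =>
    refine ih.trans ?_
    rw [cosKernelMass_succ, mul_pow, ← mul_assoc]
    gcongr
    push_cast
    rw [div_pow, mul_div_assoc', le_div_iff₀ (by positivity)]
    nlinarith [(Nat.cast_nonneg m : (0 : ℝ) ≤ m)]

lemma half_le_cosKernelMass {m : ℕ} (hm : 1 ≤ m) {δ : ℝ} (hδ : m * δ ^ 2 ≤ 4 * π ^ 2) :
    δ / 2 ≤ cosKernelMass m := by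
  have hm' : (0 : ℝ) < m := mod_cast hm
  have hsq : (δ / 2) ^ 2 ≤ cosKernelMass m ^ 2 :=
    le_of_mul_le_mul_left (by linarith [pi_sq_le_mul_cosKernelMass_sq hm]) hm'
  exact le_of_abs_le (abs_le_of_sq_le_sq hsq (cosKernelMass_pos m).le)

lemma sq_div_pi_sq_le_one_sub_cos_half_sq {s : ℝ} (hs : |s| ≤ π) :
    s ^ 2 / π ^ 2 ≤ 1 - cos (s / 2) ^ 2 := by
  have h := cos_le_one_sub_mul_cos_sq hs
  rw [cos_sq, mul_div_cancel₀ s two_ne_zero]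
  linear_combination h / 2

lemma integral_sub_mul_one_sub_cos_sq_mul_cosKernel (m : ℕ) (A B : ℝ) :
    ∫ s in (-π)..π, (B - A * (1 - cos (s / 2) ^ 2)) * cosKernel m s =
      (B - A / (2 * m + 2)) * cosKernelMass m := by
  have split (s : ℝ) : (B - A * (1 - cos (s / 2) ^ 2)) * cosKernel m s =
      (B - A) * cosKernel m s + A * cosKernel (m + 1) s := by
    rw [cosKernel_succ]
    ring
  simp only [split]
  rw [intervalIntegral.integral_add (Continuous.intervalIntegrable (by fun_prop) _ _)
    (Continuous.intervalIntegrable (by fun_prop) _ _), intervalIntegral.integral_const_mul,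
    intervalIntegral.integral_const_mul]
  change (B - A) * cosKernelMass m + A * cosKernelMass (m + 1) = _
  rw [cosKernelMass_succ]
  field_simp
  ring

lemma quarter_cosKernelMass_le_integral {m : ℕ} {δ : ℝ} (hδ : 0 < δ)
    (hm : 3 * π ^ 2 ≤ (m + 1) * δ ^ 2) {g : ℝ → ℝ} (hg : Continuous g)
    (hlow : ∀ s, -1 ≤ g s) (hnear : ∀ s, |s| ≤ δ → 1 / 2 ≤ g s) :
    cosKernelMass m / 4 ≤ ∫ s in (-π)..π, g s * cosKernel m s := by
  set A : ℝ := 3 / 2 * (π ^ 2 / δ ^ 2) with hA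
  -- This `A` makes the minorant at most `-1` off `[-δ, δ]`, and the integral of the minorant
  -- against the kernel is explicit.
  have minorant {s : ℝ} (hs : |s| ≤ π) : 1 / 2 - A * (1 - cos (s / 2) ^ 2) ≤ g s := by
    have hquad := sq_div_pi_sq_le_one_sub_cos_half_sq hs
    rcases le_or_gt |s| δ with hsδ | hsδ
    · have : 0 ≤ A * (1 - cos (s / 2) ^ 2) :=
        mul_nonneg (by positivity) (sub_nonneg.mpr (cos_sq_le_one _))
      linarith [hnear s hsδ]
    · have : 3 / 2 ≤ A * (1 - cos (s / 2) ^ 2) := calc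
        3 / 2 = A * (δ ^ 2 / π ^ 2) := by rw [hA]; field_simp
        _ ≤ A * (s ^ 2 / π ^ 2) := by rw [← sq_abs s]; gcongr
        _ ≤ A * (1 - cos (s / 2) ^ 2) := by gcongr
      linarith [hlow s]
  have hA' : A / (2 * m + 2) ≤ 1 / 4 := by
    rw [div_le_iff₀ (by positivity), hA, mul_div_assoc', div_le_iff₀ (by positivity)]
    linarith
  calc cosKernelMass m / 4
      ≤ (1 / 2 - A / (2 * m + 2)) * cosKernelMass m := by nlinarith [cosKernelMass_pos m]
    _ = ∫ s in (-π)..π, (1 / 2 - A * (1 - cos (s / 2) ^ 2)) * cosKernel m s :=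
        (integral_sub_mul_one_sub_cos_sq_mul_cosKernel m A _).symm
    _ ≤ ∫ s in (-π)..π, g s * cosKernel m s := by
        refine intervalIntegral.integral_mono_on (by linarith [pi_pos])
          (Continuous.intervalIntegrable (by fun_prop) _ _)
          (Continuous.intervalIntegrable (by fun_prop) _ _) fun s hs ↦ ?_
        exact mul_le_mul_of_nonneg_right (minorant (abs_le.mpr hs)) (cosKernel_nonneg m s)

/-! ### Fourier coefficients of a localized exponential -/

lemma integral_re_le_norm_fourierCoef {f : ℝ → ℂ} (hf : Continuous f)
    (hper : Function.Periodic f (2 * π)) (k : ℤ) (x θ : ℝ) :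
    1 / (2 * π) * ∫ s in (-π)..π,
        (Complex.exp (-θ * Complex.I) * (f (s + x) * Complex.exp (-Complex.I * k * (s + x)))).re ≤
      ‖fourierCoef f k‖ := by
  set F : ℝ → ℂ := fun t ↦ f t * Complex.exp (-Complex.I * k * t) with hF
  have hFcont : Continuous F := by fun_prop
  have hFper : Function.Periodic F (2 * π) := hper.mul fun t ↦ by
    rw [Complex.exp_eq_exp_iff_exists_int]
    exact ⟨-k, by push_cast; ring⟩
  have hshift : ∫ t in 0..(2 * π), F t = ∫ s in (-π)..π, F (s + x) := by
    rw [intervalIntegral.integral_comp_add_right]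
    convert hFper.intervalIntegral_add_eq 0 (-π + x) using 2 <;> ring
  have hre : ∫ s in (-π)..π, (Complex.exp (-θ * Complex.I) * F (s + x)).re =
      (Complex.exp (-θ * Complex.I) * ∫ s in (-π)..π, F (s + x)).re := by
    have hcont : Continuous fun s ↦ Complex.exp (-θ * Complex.I) * F (s + x) := by fun_prop
    rw [← intervalIntegral.integral_const_mul]
    exact Complex.reCLM.intervalIntegral_comp_comm (hcont.intervalIntegrable _ _)
  have hcoef : ‖fourierCoef f k‖ = 1 / (2 * π) * ‖∫ s in (-π)..π, F (s + x)‖ := by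
    rw [← hshift, fourierCoef, norm_mul]
    simp [abs_of_pos pi_pos, hF]
  have hunit : ‖Complex.exp (-θ * Complex.I)‖ = 1 := by
    simpa using Complex.norm_exp_ofReal_mul_I (-θ)
  calc 1 / (2 * π) * ∫ s in (-π)..π, _
      = 1 / (2 * π) * (Complex.exp (-θ * Complex.I) * ∫ s in (-π)..π, F (s + x)).re := by
        rw [← hre]; simp [hF]
    _ ≤ 1 / (2 * π) * ‖Complex.exp (-θ * Complex.I) * ∫ s in (-π)..π, F (s + x)‖ := by
        gcongr; exact Complex.re_le_norm _
    _ = ‖fourierCoef f k‖ := by rw [norm_mul, hunit, one_mul, hcoef]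

lemma cosKernelMass_div_le_norm_fourierCoef {m : ℕ} {δ : ℝ} (hδ : 0 < δ)
    (hm : 3 * π ^ 2 ≤ (m + 1) * δ ^ 2) {ψ : ℝ → ℝ} (hψ : Continuous ψ)
    (hper : Function.Periodic (fun t ↦ Complex.exp (Complex.I * ψ t)) (2 * π))
    {k : ℤ} {x θ : ℝ} (hphase : ∀ t, |t - x| ≤ δ → |ψ t - k * t - θ| ≤ 1) :
    cosKernelMass m / (8 * π) ≤
      ‖fourierCoef (fun t ↦ Complex.exp (Complex.I * ψ t) * cosKernel m (t - x)) k‖ := by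
  have half_le_cos {y : ℝ} (hy : |y| ≤ 1) : 1 / 2 ≤ cos y := by
    linarith [one_sub_sq_div_two_le_cos (x := y), (sq_le_one_iff_abs_le_one y).mpr hy]
  have hmass : cosKernelMass m / 4 ≤
      ∫ s in (-π)..π, cos (ψ (s + x) - k * (s + x) - θ) * cosKernel m s :=
    quarter_cosKernelMass_le_integral hδ hm (by fun_prop) (fun s ↦ neg_one_le_cos _)
      fun s hs ↦ half_le_cos (hphase (s + x) (by rwa [add_sub_cancel_right]))
  have hre (s : ℝ) : (Complex.exp (-θ * Complex.I) *
      (Complex.exp (Complex.I * ψ (s + x)) * cosKernel m (s + x - x) *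
        Complex.exp (-Complex.I * k * (s + x)))).re =
      cos (ψ (s + x) - k * (s + x) - θ) * cosKernel m s := by
    rw [← Complex.exp_ofReal_mul_I_re, ← Complex.re_mul_ofReal, add_sub_cancel_right,
      mul_right_comm, ← mul_assoc, ← Complex.exp_add, ← Complex.exp_add]
    push_cast
    ring_nf
  have hper' : Function.Periodic
      (fun t ↦ Complex.exp (Complex.I * ψ t) * cosKernel m (t - x)) (2 * π) :=
    hper.mul (((cosKernel_periodic m).sub_const x).comp Complex.ofReal)
  have hle := integral_re_le_norm_fourierCoef (by fun_prop) hper' k x θ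
  simp only [hre] at hle
  refine le_trans ?_ hle
  calc cosKernelMass m / (8 * π) = 1 / (2 * π) * (cosKernelMass m / 4) := by ring
    _ ≤ _ := by gcongr

lemma exists_localization_exponent {δ : ℝ} (hδ : 0 < δ) (hδπ : δ ≤ π) :
    ∃ m : ℕ, 3 * π ^ 2 ≤ (m + 1) * δ ^ 2 ∧ δ / 2 ≤ cosKernelMass m := by
  have hratio : 1 ≤ π ^ 2 / δ ^ 2 := by rw [one_le_div (by positivity)]; gcongr
  set m := ⌈3 * (π ^ 2 / δ ^ 2)⌉₊
  have hle : 3 * (π ^ 2 / δ ^ 2) ≤ m := Nat.le_ceil _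
  have hlt : m < 3 * (π ^ 2 / δ ^ 2) + 1 := Nat.ceil_lt_add_one (by positivity)
  refine ⟨m, ?_, half_le_cosKernelMass (Nat.ceil_pos.mpr (by positivity)) ?_⟩
  · rw [← div_le_iff₀ (by positivity)]
    linarith [mul_div_assoc 3 (π ^ 2) (δ ^ 2)]
  · rw [← le_div_iff₀ (by positivity)]
    linarith [mul_div_assoc 4 (π ^ 2) (δ ^ 2)]

lemma card_rpow_mul_le_ApNorm_exp {p : ℝ} (hp : 1 ≤ p) {δ : ℝ} (hδ : 0 < δ) (hδπ : δ ≤ π)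
    {ψ : ℝ → ℝ} (hψ : Differentiable ℝ ψ)
    (hper : Function.Periodic (fun t ↦ Complex.exp (Complex.I * ψ t)) (2 * π)) (S : Finset ℤ)
    (hS : ∀ k ∈ S, ∃ x, ∀ t, |t - x| ≤ δ → |deriv ψ t - k| ≤ 1 / δ) :
    ENNReal.ofReal ((S.card : ℝ) ^ (1 / p) * (δ / (16 * π))) ≤
      ApNorm p fun t ↦ Complex.exp (Complex.I * ψ t) := by
  have hψc := hψ.continuous
  obtain ⟨m, hm, hmass⟩ := exists_localization_exponent hδ hδπ
  refine card_rpow_mul_le_ApNorm hp m (Continuous.intervalIntegrable (by fun_prop) _ _) S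
    fun k hk ↦ ?_
  obtain ⟨x, hx⟩ := hS k hk
  have hphase (t : ℝ) (ht : |t - x| ≤ δ) : |ψ t - k * t - (ψ x - k * x)| ≤ 1 := by
    have hmvt := (convex_closedBall x δ).norm_image_sub_le_of_norm_hasDerivWithin_le
      (f := fun t ↦ ψ t - k * t)
      (fun y _ ↦ ((hψ y).hasDerivAt.sub (hasDerivAt_const_mul (k : ℝ))).hasDerivWithinAt)
      (fun y hy ↦ hx y hy) (Metric.mem_closedBall_self hδ.le) ht
    calc |ψ t - k * t - (ψ x - k * x)| ≤ 1 / δ * |t - x| := hmvt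
      _ ≤ 1 / δ * δ := by gcongr
      _ = 1 := one_div_mul_cancel hδ.ne'
  refine ⟨x, le_trans ?_ (cosKernelMass_div_le_norm_fourierCoef hδ hm hψc hper hphase)⟩
  calc δ / (16 * π) = δ / 2 / (8 * π) := by ring
    _ ≤ cosKernelMass m / (8 * π) := by gcongr

/-! ### Nonlinear circle maps -/

lemma exists_deriv_ne_of_not_affine {f : ℝ → ℝ} (hf : Differentiable ℝ f)
    (hna : ¬ ∃ a b : ℝ, ∀ t : ℝ, f t = a * t + b) : ∃ u v, deriv f u ≠ deriv f v := by
  contrapose! hna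
  have hderiv (t : ℝ) : HasDerivAt (fun t ↦ f t - deriv f 0 * t) 0 t := by
    have h := (hf t).hasDerivAt.sub (hasDerivAt_const_mul (x := t) (deriv f 0))
    rwa [hna t 0, sub_self] at h
  refine ⟨deriv f 0, f 0, fun t ↦ ?_⟩
  have := is_const_of_deriv_eq_zero (fun t ↦ (hderiv t).differentiableAt)
    (fun t ↦ (hderiv t).deriv) t 0
  linarith

lemma exists_finset_int_near_range {X : Type*} [TopologicalSpace X] [PreconnectedSpace X]
    {F : X → ℝ} (hF : Continuous F) (u v : X) :
    ∃ S : Finset ℤ, |F u - F v| ≤ S.card ∧ ∀ k ∈ S, ∃ x, |F x - k| ≤ 1 := by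
  wlog huv : F u ≤ F v generalizing u v
  · simpa only [abs_sub_comm] using this v u (le_of_not_ge huv)
  refine ⟨Finset.Icc ⌈F u⌉ ⌈F v⌉, ?_, fun k hk ↦ ?_⟩
  · have hcard : ((⌈F v⌉ + 1 - ⌈F u⌉ : ℤ) : ℝ) ≤ (Finset.Icc ⌈F u⌉ ⌈F v⌉).card := by
      rw [Int.card_Icc]
      exact_mod_cast Int.self_le_toNat _
    push_cast at hcard
    rw [abs_sub_comm, abs_of_nonneg (sub_nonneg.mpr huv)]
    linarith [Int.le_ceil (F v), Int.ceil_lt_add_one (F u)]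
  · rw [Finset.mem_Icc, Int.ceil_le] at hk
    have hkv : (k : ℝ) < F v + 1 := (Int.cast_le.mpr hk.2).trans_lt (Int.ceil_lt_add_one _)
    obtain ⟨x, hx⟩ := intermediate_value_univ u v hF ⟨le_min hk.1 huv, min_le_right (k : ℝ) (F v)⟩
    refine ⟨x, ?_⟩
    rw [hx, abs_le]
    exact ⟨by linarith [le_min (by linarith : (k : ℝ) - 1 ≤ k) (by linarith : k - 1 ≤ F v)],
      by linarith [min_le_left (k : ℝ) (F v)]⟩

lemma exists_bound_of_mul_le_one {ω : ℝ → ℝ} (hω : MonotoneOn ω (Ici 0)) {x : ℝ} (hx : 0 ≤ x)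
    (hωx : 0 < ω x) : ∃ D, 0 < D ∧ ∀ δ, 0 ≤ δ → δ * ω δ ≤ 1 → δ ≤ D := by
  refine ⟨x + 1 / ω x, by positivity, fun δ hδ hle ↦ ?_⟩
  rcases le_total δ x with hδx | hxδ
  · exact hδx.trans (le_add_of_nonneg_right (by positivity))
  · have : δ ≤ 1 / ω x := by
      rw [le_div_iff₀ hωx]
      exact (mul_le_mul_of_nonneg_left (hω hx hδ hxδ) hδ).trans hle
    linarith

lemma periodic_exp_int_mul {φ : ℝ → ℝ} {T : ℝ}
    (hφ : ∀ t, ∃ k : ℤ, φ (t + T) - φ t = 2 * π * k) (n : ℤ) :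
    Function.Periodic (fun t ↦ Complex.exp (Complex.I * (n * φ t : ℝ))) T := fun t ↦ by
  obtain ⟨k, hk⟩ := hφ t
  rw [sub_eq_iff_eq_add'] at hk
  rw [Complex.exp_eq_exp_iff_exists_int]
  exact ⟨n * k, by rw [hk]; push_cast; ring⟩

lemma abs_deriv_sub_le_of_modulus {φ ω : ℝ → ℝ} {C D : ℝ} (hω : MonotoneOn ω (Ici 0))
    (hC : 0 ≤ C) (hlip : ∀ s t : ℝ, |deriv φ s - deriv φ t| ≤ C * ω |s - t|)
    {n k δ x : ℝ} (hδ : 0 < δ) (hδD : δ ≤ D) (hnδ : |n| * (δ * ω δ) ≤ 1)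
    (hx : |n * deriv φ x - k| ≤ 1) {t : ℝ} (ht : |t - x| ≤ δ / (1 + C + D)) :
    |n * deriv φ t - k| ≤ 1 / (δ / (1 + C + D)) := by
  have htδ : |t - x| ≤ δ := ht.trans (div_le_self hδ.le (by linarith))
  rw [one_div_div, le_div_iff₀ hδ]
  calc |n * deriv φ t - k| * δ
      = |n * (deriv φ t - deriv φ x) + (n * deriv φ x - k)| * δ := by ring_nf
    _ ≤ (|n| * |deriv φ t - deriv φ x| + |n * deriv φ x - k|) * δ := by
        rw [← abs_mul]; gcongr; exact abs_add_le _ _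
    _ ≤ (|n| * (C * ω δ) + 1) * δ := by
        gcongr
        exact (hlip t x).trans (by gcongr; exact hω (mem_Ici.mpr (abs_nonneg _)) hδ.le htδ)
    _ = C * (|n| * (δ * ω δ)) + δ := by ring
    _ ≤ C * 1 + D := by gcongr
    _ ≤ 1 + C + D := by linarith

theorem statement15_general {p : ℝ} (hp : 1 ≤ p) {ω : ℝ → ℝ} (hω_mono : MonotoneOn ω (Ici 0))
    {φ : ℝ → ℝ} (hφ_circ : ∀ t : ℝ, ∃ k : ℤ, φ (t + 2 * π) - φ t = 2 * π * k)
    (hφ_C1 : ContDiff ℝ 1 φ)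
    (hφ_lip : ∃ C : ℝ, 0 < C ∧ ∀ s t : ℝ, |deriv φ s - deriv φ t| ≤ C * ω |s - t|)
    (hφ_nonlinear : ¬ ∃ a b : ℝ, ∀ t : ℝ, φ t = a * t + b) :
    ∃ c : ℝ, 0 < c ∧ ∀ n : ℤ, n ≠ 0 → ∀ δ : ℝ, 0 ≤ δ → δ * ω δ ≤ 1 / |(n : ℝ)| →
      ENNReal.ofReal (c * |(n : ℝ)| ^ (1 / p) * δ) ≤
        ApNorm p (fun t ↦ Complex.exp (Complex.I * (n : ℂ) * (φ t : ℂ))) := by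
  obtain ⟨C, hC, hlip⟩ := hφ_lip
  have hφ_diff : Differentiable ℝ φ := hφ_C1.differentiable one_ne_zero
  obtain ⟨u, v, huv⟩ := exists_deriv_ne_of_not_affine hφ_diff hφ_nonlinear
  have hgap : 0 < |deriv φ u - deriv φ v| := abs_sub_pos.mpr huv
  obtain ⟨D, hD, hbound⟩ := exists_bound_of_mul_le_one hω_mono (abs_nonneg (u - v))
    (pos_of_mul_pos_right (hgap.trans_le (hlip u v)) hC.le)
  refine ⟨|deriv φ u - deriv φ v| ^ (1 / p) / (16 * π * (1 + C + D)), by positivity,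
    fun n hn δ hδ hδn ↦ ?_⟩
  obtain rfl | hδ := hδ.eq_or_lt
  · simp
  have hn1 : 1 ≤ |(n : ℝ)| := mod_cast Int.one_le_abs hn
  have hδD : δ ≤ D := hbound δ hδ.le (hδn.trans (div_le_one_of_le₀ hn1 (abs_nonneg _)))
  have hsmall : δ / (1 + C + D) ≤ 1 := div_le_one_of_le₀ (by linarith) (by positivity)
  rw [le_div_iff₀' (by positivity)] at hδn
  obtain ⟨S, hcard, hS⟩ := exists_finset_int_near_range
    (hφ_C1.continuous_deriv_one.const_mul (n : ℝ)) u v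
  have hmain := card_rpow_mul_le_ApNorm_exp hp (by positivity)
    (hsmall.trans (by linarith [pi_gt_three]))
    (hφ_diff.const_mul (n : ℝ)) (periodic_exp_int_mul hφ_circ n) S fun k hk ↦ by
      obtain ⟨x, hx⟩ := hS k hk
      refine ⟨x, fun t ht ↦ ?_⟩
      rw [deriv_const_mul _ (hφ_diff t)]
      exact abs_deriv_sub_le_of_modulus hω_mono hC.le hlip hδ hδD hδn hx ht
  simp only [Complex.ofReal_mul, Complex.ofReal_intCast, ← mul_assoc] at hmain
  refine (ENNReal.ofReal_le_ofReal ?_).trans hmain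
  calc _ = (|(n : ℝ)| * |deriv φ u - deriv φ v|) ^ (1 / p) * (δ / (1 + C + D) / (16 * π)) := by
        rw [mul_rpow (by positivity) (by positivity)]
        field_simp
    _ ≤ _ := by
        gcongr
        rwa [← abs_mul, mul_sub]

/-- Theorem 3: for a nonlinear C^{1,ω}-smooth map φ of the circle into
itself, ‖e^{inφ}‖_{A_p} ≥ c_p·|n|^{1/p}·χ^{-1}(1/|n|) for all nonzero integers n. -/
theorem statement15
    (p : ℝ) (hp1 : 1 ≤ p) (hp2 : p < 2)
    -- ω is a modulus of continuity: continuous non-decreasing on [0,∞), ω(0)=0, ω(δ)>0 for δ>0,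
    -- with χ(δ) = δ·ω(δ) strictly increasing and unbounded, and χinv its inverse.
    (ω : ℝ → ℝ)
    (hω_cont : ContinuousOn ω (Ici 0)) (hω_mono : MonotoneOn ω (Ici 0))
    (hω_zero : ω 0 = 0) (hω_pos : ∀ δ : ℝ, 0 < δ → 0 < ω δ)
    (hχ_mono : StrictMonoOn (fun δ => δ * ω δ) (Ici 0))
    (hχ_unbdd : ∀ y : ℝ, ∃ δ : ℝ, 0 ≤ δ ∧ y < δ * ω δ)
    (χinv : ℝ → ℝ)
    (hχinv_left : ∀ δ : ℝ, 0 ≤ δ → χinv (δ * ω δ) = δ)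
    (hχinv_right : ∀ y : ℝ, 0 ≤ y → 0 ≤ χinv y ∧ χinv y * ω (χinv y) = y)
    (φ : ℝ → ℝ)
    -- φ is a map of the circle into itself: φ(t+2π) = φ(t) (mod 2π)
    (hφ_circ : ∀ t : ℝ, ∃ k : ℤ, φ (t + 2 * Real.pi) - φ t = 2 * Real.pi * k)
    (hφ_C1 : ContDiff ℝ 1 φ)
    (hφ_lip : ∃ C : ℝ, 0 < C ∧ ∀ s t : ℝ, |deriv φ s - deriv φ t| ≤ C * ω |s - t|)
    -- φ is nonlinear
    (hφ_nonlinear : ¬ ∃ a b : ℝ, ∀ t : ℝ, φ t = a * t + b) :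
    ∃ c : ℝ, 0 < c ∧ ∀ n : ℤ, n ≠ 0 →
      ENNReal.ofReal (c * |(n : ℝ)| ^ (1 / p) * χinv (1 / |(n : ℝ)|)) ≤
        ApNorm p (fun t => Complex.exp (Complex.I * (n : ℂ) * (φ t : ℂ))) := by
  obtain ⟨c, hc, hle⟩ := statement15_general hp1 hω_mono hφ_circ hφ_C1 hφ_lip hφ_nonlinear
  exact ⟨c, hc, fun n hn ↦ have hχ := hχinv_right (1 / |(n : ℝ)|) (by positivity)
    hle n hn _ hχ.1 hχ.2.le⟩
end
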